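/- arXiv:2209.00051 — 5 statements merged into one kernel-verified Lean document; each statement's English description precedes it below -/
import Mathlib

section
/- Let n ≥ 1. For every function f : [n] → ℙ′ there is exactly one permutation w ∈ S_n such that f is an enriched w-partition. -/
/-- The Stembridge total order `⪯` on the nonzero integers `ℙ′`:
`a ⪯ b` iff `a = b`, or `|a| < |b|`, or `|a| = |b|` with `a < 0 < b`. -/
def ple (a b : ℤ) : Prop :=
  a = b ∨ |a| < |b| ∨ (|a| = |b| ∧ a < 0 ∧ 0 < b)

/-- `f : [n] → ℙ′` is an enriched `v`-partition, where the word of `v` is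
`v 0, v 1, …, v (n-1)` (0-indexed positions): `f` never vanishes,
`f (v j) ⪯ f (v (j+1))` for consecutive positions, equal positive values force an
ascent of the word and equal negative values force a descent. -/
def IsEnrichedLin (n : ℕ) (v : Fin n → Fin n) (f : Fin n → ℤ) : Prop :=
  (∀ i, f i ≠ 0) ∧
  ∀ j k : Fin n, (j : ℕ) + 1 = (k : ℕ) →
    ple (f (v j)) (f (v k)) ∧
      (f (v j) = f (v k) → (0 < f (v j) → v j < v k) ∧ (f (v j) < 0 → v k < v j))

/-- The sort key of position `i`: first the rank of `f i` for `⪯`, then `i` itself, reversed when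
`f i` is negative. -/
def enrichedKey {n : ℕ} (f : Fin n → ℤ) (i : Fin n) : ℤ ×ₗ ℤ :=
  toLex (4 * |f i| + (f i).sign, (f i).sign * (i : ℤ))

theorem enrichedKey_lt_iff {n : ℕ} {f : Fin n → ℤ} (hf : ∀ i, f i ≠ 0) {i j : Fin n}
    (hij : i ≠ j) :
    enrichedKey f i < enrichedKey f j ↔
      ple (f i) (f j) ∧ (f i = f j → (0 < f i → i < j) ∧ (f i < 0 → j < i)) := by
  have hij' : (i : ℕ) ≠ j := fun h => hij (Fin.ext h)
  simp only [enrichedKey, Prod.Lex.toLex_lt_toLex, ple, Fin.lt_def]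
  rcases (hf i).lt_or_gt with hi | hi <;> rcases (hf j).lt_or_gt with hj | hj <;>
    simp only [Int.sign_eq_neg_one_of_neg, Int.sign_eq_one_of_pos, abs_of_neg, abs_of_pos,
      hi, hj] <;> grind

theorem enrichedKey_injective {n : ℕ} {f : Fin n → ℤ} (hf : ∀ i, f i ≠ 0) :
    Function.Injective (enrichedKey f) := by
  intro i j h
  simp only [enrichedKey, EmbeddingLike.apply_eq_iff_eq, Prod.mk.injEq] at h
  apply Fin.ext
  rcases (hf i).lt_or_gt with hi | hi <;> rcases (hf j).lt_or_gt with hj | hj <;>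
    simp only [Int.sign_eq_neg_one_of_neg, Int.sign_eq_one_of_pos, abs_of_neg, abs_of_pos,
      hi, hj] at h <;> omega

theorem isEnrichedLin_iff_strictMono {n : ℕ} {f : Fin n → ℤ} (hf : ∀ i, f i ≠ 0)
    (w : Equiv.Perm (Fin n)) :
    IsEnrichedLin n w f ↔ StrictMono (enrichedKey f ∘ w) := by
  have key : ∀ j k : Fin n, (j : ℕ) + 1 = k →
      (enrichedKey f (w j) < enrichedKey f (w k) ↔ _) := fun j k hjk =>
    enrichedKey_lt_iff hf (w.injective.ne (by rintro rfl; omega))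
  constructor
  · rintro ⟨-, h⟩
    cases n with
    | zero => exact fun i => i.elim0
    | succ m =>
      exact Fin.strictMono_iff_lt_succ.2 fun i =>
        (key i.castSucc i.succ (by simp)).2 (h _ _ (by simp))
  · exact fun h => ⟨hf, fun j k hjk => (key j k hjk).1 (h (Fin.lt_def.2 (by omega)))⟩

/-- for `n ≥ 1`, every `f : [n] → ℙ′` is an enriched `w`-partition for
exactly one permutation `w ∈ S_n`. -/
theorem stmt0 (n : ℕ) (hn : 1 ≤ n) (f : Fin n → ℤ) (hf : ∀ i, f i ≠ 0) :
    ∃! w : Equiv.Perm (Fin n), IsEnrichedLin n ⇑w f := by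
  have hinj := enrichedKey_injective hf
  refine ⟨Tuple.sort (enrichedKey f), ?_, fun w hw => ?_⟩
  · exact (isEnrichedLin_iff_strictMono hf _).2
      ((Tuple.monotone_sort _).strictMono_of_injective (hinj.comp (Equiv.injective _)))
  · have hmono := (isEnrichedLin_iff_strictMono hf w).1 hw
    exact Tuple.eq_sort_iff.2
      ⟨hmono.monotone, fun i j hij h => absurd h (hmono hij).ne⟩
end

section
/- Let w ∈ S_n. Among the n rotations v ∈ [w] of w, exactly 2·cpk(w) of them satisfy pk(v) = cpk(w) − 1 (namely those that begin or end with a cyclic peak value), and the remaining n − 2·cpk(w) of them satisfy pk(v) = cpk(w). -/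
/-- The `i`-th rotation of the word `w = w 0, w 1, …, w (n-1)` (0-indexed):
`rotF n i w` has `j`-th letter `w (j + i)`, indices mod `n`. -/
def rotF (n : ℕ) (i : Fin n) (w : Fin n → Fin n) : Fin n → Fin n :=
  fun j => w (j + i)

/-- The cyclic descent set `cDes w` (0-indexed positions, indices mod `n`):
positions `i` with `w i > w (i+1)`. -/
def cDesF (n : ℕ) [NeZero n] (w : Fin n → Fin n) : Finset (Fin n) :=
  Finset.univ.filter fun i => w (i + 1) < w i

/-- The cyclic peak set `cPk w` (0-indexed positions, indices mod `n`):
positions `i` with `w (i-1) < w i > w (i+1)`. -/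
def cPkF (n : ℕ) [NeZero n] (w : Fin n → Fin n) : Finset (Fin n) :=
  Finset.univ.filter fun i => w (i - 1) < w i ∧ w (i + 1) < w i

/-- The linear peak set `Pk w` (0-indexed: positions `i` with `1 ≤ i ≤ n-2`,
i.e. `2 ≤ i+1 ≤ n-1` in 1-indexed terms, such that `w (i-1) < w i > w (i+1)`). -/
def PkF (n : ℕ) [NeZero n] (w : Fin n → Fin n) : Finset (Fin n) :=
  Finset.univ.filter fun i =>
    0 < (i : ℕ) ∧ (i : ℕ) < n - 1 ∧ w (i - 1) < w i ∧ w (i + 1) < w i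

theorem mem_cPkF {n : ℕ} [NeZero n] {w : Fin n → Fin n} {j : Fin n} :
    j ∈ cPkF n w ↔ w (j - 1) < w j ∧ w (j + 1) < w j := by
  simp [cPkF]

theorem mem_cPkF_rotF {n : ℕ} [NeZero n] {w : Fin n → Fin n} {i j : Fin n} :
    j ∈ cPkF n (rotF n i w) ↔ j + i ∈ cPkF n w := by
  simp only [mem_cPkF, rotF, sub_add_eq_add_sub, add_right_comm]

theorem card_cPkF_rotF {n : ℕ} [NeZero n] (w : Fin n → Fin n) (i : Fin n) :
    (cPkF n (rotF n i w)).card = (cPkF n w).card :=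
  Finset.card_equiv (Equiv.addRight i) fun _ => mem_cPkF_rotF

/-- Two cyclically adjacent positions are not both cyclic peaks. -/
theorem sub_one_notMem_cPkF {n : ℕ} [NeZero n] {w : Fin n → Fin n} {j : Fin n}
    (hj : j ∈ cPkF n w) : j - 1 ∉ cPkF n w := by
  intro h
  have h' := (mem_cPkF.1 h).2
  rw [sub_add_cancel] at h'
  exact lt_asymm (mem_cPkF.1 hj).1 h'

theorem Fin.val_lt_pred_iff_ne_zero_sub_one {n : ℕ} [NeZero n] (j : Fin n) :
    (j : ℕ) < n - 1 ↔ j ≠ 0 - 1 := by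
  obtain ⟨m, rfl⟩ := Nat.exists_eq_succ_of_ne_zero (NeZero.ne n)
  rw [Ne, Fin.ext_iff, zero_sub, Fin.coe_neg_one]
  omega

theorem PkF_eq_erase_cPkF {n : ℕ} [NeZero n] (w : Fin n → Fin n) :
    PkF n w = ((cPkF n w).erase 0).erase (0 - 1) := by
  ext j
  simp only [PkF, Finset.mem_filter, Finset.mem_univ, true_and, Finset.mem_erase, mem_cPkF,
    Fin.val_lt_pred_iff_ne_zero_sub_one, Fin.val_pos_iff, Fin.pos_iff_ne_zero]
  tauto

/-- A word has one linear peak fewer than cyclic peaks if it begins or ends with a cyclic peak,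
and equally many otherwise. -/
theorem card_PkF_add_ite {n : ℕ} [NeZero n] (w : Fin n → Fin n) :
    (PkF n w).card + (if 0 ∈ cPkF n w ∨ 0 - 1 ∈ cPkF n w then 1 else 0) = (cPkF n w).card := by
  rw [PkF_eq_erase_cPkF]
  by_cases h0 : 0 ∈ cPkF n w
  · have h1 := sub_one_notMem_cPkF h0
    rw [Finset.erase_eq_of_notMem fun h => h1 (Finset.mem_of_mem_erase h), if_pos (Or.inl h0),
      Finset.card_erase_add_one h0]
  · rw [Finset.erase_eq_of_notMem h0]
    by_cases h1 : 0 - 1 ∈ cPkF n w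
    · rw [if_pos (Or.inr h1), Finset.card_erase_add_one h1]
    · rw [if_neg (not_or.2 ⟨h0, h1⟩), Finset.erase_eq_of_notMem h1, add_zero]

/-- The rotations beginning or ending with a cyclic peak number twice the cyclic peaks. -/
theorem card_filter_mem_cPkF_rotF {n : ℕ} [NeZero n] (w : Fin n → Fin n) :
    (Finset.univ.filter fun i : Fin n =>
      0 ∈ cPkF n (rotF n i w) ∨ 0 - 1 ∈ cPkF n (rotF n i w)).card = 2 * (cPkF n w).card := by
  simp only [mem_cPkF_rotF, zero_add, sub_add_eq_add_sub]
  rw [Finset.filter_or, Finset.card_union_of_disjoint, two_mul]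
  · congr 1
    · simp
    · exact Finset.card_equiv (Equiv.subRight 1) fun i => by simp
  · rw [Finset.disjoint_filter]
    exact fun i _ hi => sub_one_notMem_cPkF hi

/-- among the `n` rotations `v = rot_i w` of `w`, exactly `2·cpk w`
satisfy `pk v = cpk w − 1` — namely those beginning or ending with a cyclic peak
value, i.e. those whose first (0-indexed position `0`) or last (position `n-1`,
i.e. `0 - 1` mod `n`) position is a cyclic peak — and the remaining `n − 2·cpk w`
rotations satisfy `pk v = cpk w`. -/
theorem stmt6 (n : ℕ) [NeZero n] (w : Equiv.Perm (Fin n)) :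
    ((Finset.univ : Finset (Fin n)).filter fun i =>
        ((PkF n (rotF n i ⇑w)).card : ℤ) = ((cPkF n ⇑w).card : ℤ) - 1).card
      = 2 * (cPkF n ⇑w).card ∧
    ((Finset.univ : Finset (Fin n)).filter fun i =>
        ((PkF n (rotF n i ⇑w)).card : ℤ) = ((cPkF n ⇑w).card : ℤ)).card
      = n - 2 * (cPkF n ⇑w).card ∧
    ∀ i : Fin n, ((PkF n (rotF n i ⇑w)).card : ℤ) = ((cPkF n ⇑w).card : ℤ) - 1 ↔
      ((0 : Fin n) ∈ cPkF n (rotF n i ⇑w) ∨ (0 - 1 : Fin n) ∈ cPkF n (rotF n i ⇑w)) := by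
  have hpk (i : Fin n) := card_PkF_add_ite (rotF n i w)
  simp only [card_cPkF_rotF] at hpk
  have hiff (i : Fin n) : ((PkF n (rotF n i ⇑w)).card : ℤ) = ((cPkF n ⇑w).card : ℤ) - 1 ↔
      ((0 : Fin n) ∈ cPkF n (rotF n i ⇑w) ∨ (0 - 1 : Fin n) ∈ cPkF n (rotF n i ⇑w)) := by
    have h := hpk i
    split_ifs at h with hc
    · exact iff_of_true (by omega) hc
    · exact iff_of_false (by omega) hc
  have hiff_not (i : Fin n) : ((PkF n (rotF n i ⇑w)).card : ℤ) = ((cPkF n ⇑w).card : ℤ) ↔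
      ¬((0 : Fin n) ∈ cPkF n (rotF n i ⇑w) ∨ (0 - 1 : Fin n) ∈ cPkF n (rotF n i ⇑w)) := by
    have h := hpk i
    rw [← hiff]
    split_ifs at h <;> omega
  refine ⟨?_, ?_, hiff⟩
  · simp only [hiff]
    exact card_filter_mem_cPkF_rotF w
  · simp only [hiff_not]
    rw [← card_filter_mem_cPkF_rotF w, Finset.filter_not, Finset.card_sdiff_of_subset
      (Finset.filter_subset _ _), Finset.card_univ, Fintype.card_fin]
end

section
/- Let w, w′ ∈ S_n and suppose cPk(w′) = cPk(w) + i (a cyclic shift mod n) for some i ∈ ℤ. Then for every finitely supported function d : ℙ → ℕ, the number of f ∈ E^tor([w]) with weight d_f = d equals the number of f ∈ E^tor([w′]) with weight d_f = d. (Equivalently, Δ^cyc_{[w]} depends only on the cyclic peak set cPk w up to cyclic shift.) -/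
/-- The condition on two adjacent letters `x`, `y` with values `a`, `b` in an enriched partition. -/
def AdjacentOK {n : ℕ} (x y : Fin n) (a b : ℤ) : Prop :=
  ple a b ∧ (a = b → (0 < a → x < y) ∧ (a < 0 → y < x))

/-- The adjacency condition splits into monotonicity of absolute values and, within a block of
equal absolute value, sign constraints each concerning a single letter. -/
lemma adjacentOK_iff {n : ℕ} {x y : Fin n} (hxy : x ≠ y) {a b : ℤ} (hb : b ≠ 0) :
    AdjacentOK x y a b ↔ a.natAbs ≤ b.natAbs ∧
      (a.natAbs = b.natAbs → (x < y → 0 < b) ∧ (y < x → a < 0)) := by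
  have hxy' : (x : ℕ) ≠ y := fun h => hxy (Fin.ext h)
  simp only [AdjacentOK, ple, Fin.lt_def, Int.abs_eq_natAbs]
  omega

/-- The position `p` is forced to be positive by its left neighbour. -/
def ForcedPos {n : ℕ} (v : Fin n → Fin n) (h : Fin n → ℕ) (p : Fin n) : Prop :=
  ∃ j : Fin n, (j : ℕ) + 1 = p ∧ h j = h p ∧ v j < v p

/-- The position `p` is forced to be negative by its right neighbour. -/
def ForcedNeg {n : ℕ} (v : Fin n → Fin n) (h : Fin n → ℕ) (p : Fin n) : Prop :=
  ∃ k : Fin n, (p : ℕ) + 1 = k ∧ h p = h k ∧ v k < v p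

/-- The admissible signs (`true` for positive) at the position `p`. -/
abbrev AdmissibleSign {n : ℕ} (v : Fin n → Fin n) (h : Fin n → ℕ) (p : Fin n) : Type :=
  {b : Bool // (ForcedPos v h p → b = true) ∧ (ForcedNeg v h p → b = false)}

open Classical in
lemma card_admissibleSign {n : ℕ} (v : Fin n → Fin n) (h : Fin n → ℕ) (p : Fin n)
    (hp : ¬ (ForcedPos v h p ∧ ForcedNeg v h p)) :
    Fintype.card (AdmissibleSign v h p) *
      2 ^ ((if ForcedPos v h p then 1 else 0) + (if ForcedNeg v h p then 1 else 0)) = 2 := by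
  rw [Fintype.card_subtype]
  by_cases h1 : ForcedPos v h p <;> by_cases h2 : ForcedNeg v h p
  · exact absurd ⟨h1, h2⟩ hp
  all_goals simp [h1, h2, Finset.filter_insert, Finset.filter_singleton]

open Classical in
/-- Every adjacent pair inside a block forces exactly one sign. -/
lemma card_forcedPos_add_card_forcedNeg {n : ℕ} (v : Fin n → Fin n) (hv : Function.Injective v)
    (h : Fin n → ℕ) :
    (Finset.univ.filter (ForcedPos v h)).card + (Finset.univ.filter (ForcedNeg v h)).card =
      (Finset.univ.filter
        (fun q : Fin n × Fin n => (q.1 : ℕ) + 1 = q.2 ∧ h q.1 = h q.2)).card := by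
  set B := Finset.univ.filter (fun q : Fin n × Fin n => (q.1 : ℕ) + 1 = q.2 ∧ h q.1 = h q.2)
    with hB
  have hpos : Finset.univ.filter (ForcedPos v h) =
      (B.filter fun q => v q.1 < v q.2).image Prod.snd := by
    ext p
    simp [ForcedPos, hB, and_assoc]
  have hneg : Finset.univ.filter (ForcedNeg v h) =
      (B.filter fun q => ¬ v q.1 < v q.2).image Prod.fst := by
    ext p
    simp only [ForcedNeg, hB, Finset.mem_filter, Finset.mem_univ, true_and, Finset.mem_image,
      Prod.exists, exists_and_right, exists_eq_right, not_lt]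
    rw [exists_congr fun k => and_assoc.symm]
    refine exists_congr fun k => and_congr_right fun hk => ?_
    refine ⟨le_of_lt, fun hle => lt_of_le_of_ne hle fun he => ?_⟩
    have := hv he
    subst this
    omega
  rw [hpos, hneg, Finset.card_image_of_injOn, Finset.card_image_of_injOn,
    Finset.card_filter_add_card_filter_not]
  · rintro ⟨a, b⟩ hq ⟨a', b'⟩ hq' heq
    simp only [hB, Finset.coe_filter, Finset.mem_filter, Finset.mem_univ, true_and,
      Set.mem_ofPred_eq] at hq hq' heq
    ext <;> simp <;> omega
  · rintro ⟨a, b⟩ hq ⟨a', b'⟩ hq' heq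
    simp only [hB, Finset.coe_filter, Finset.mem_filter, Finset.mem_univ, true_and,
      Set.mem_ofPred_eq] at hq hq' heq
    ext <;> simp <;> omega

open Classical in
lemma card_signs_mul {n : ℕ} (v : Fin n → Fin n) (hv : Function.Injective v)
    (h : Fin n → ℕ) (hp : ∀ p, ¬ (ForcedPos v h p ∧ ForcedNeg v h p)) :
    Fintype.card (∀ p, AdmissibleSign v h p) * 2 ^ (Finset.univ.filter
        (fun q : Fin n × Fin n => (q.1 : ℕ) + 1 = q.2 ∧ h q.1 = h q.2)).card = 2 ^ n := by
  rw [← card_forcedPos_add_card_forcedNeg v hv h, Fintype.card_pi, Finset.card_filter,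
    Finset.card_filter, ← Finset.sum_add_distrib, ← Finset.prod_pow_eq_pow_sum,
    ← Finset.prod_mul_distrib, Finset.prod_congr rfl fun p _ => card_admissibleSign v h p (hp p)]
  simp

/-- The sign choices for two words with the same peaks are equinumerous. -/
lemma nonempty_signs_equiv {n : ℕ} (v v' : Fin n → Fin n) (hv : Function.Injective v)
    (hv' : Function.Injective v') (h : Fin n → ℕ)
    (hpk : ∀ j p k : Fin n, (j : ℕ) + 1 = p → (p : ℕ) + 1 = k →
      ((v j < v p ∧ v k < v p) ↔ (v' j < v' p ∧ v' k < v' p))) :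
    Nonempty ((∀ p, AdmissibleSign v h p) ≃ (∀ p, AdmissibleSign v' h p)) := by
  classical
  have hiff : ∀ p, (ForcedPos v h p ∧ ForcedNeg v h p) ↔
      (ForcedPos v' h p ∧ ForcedNeg v' h p) := by
    intro p
    constructor
    · rintro ⟨⟨j, hj, hj', hj''⟩, ⟨k, hk, hk', hk''⟩⟩
      obtain ⟨h1, h2⟩ := (hpk j p k hj hk).1 ⟨hj'', hk''⟩
      exact ⟨⟨j, hj, hj', h1⟩, ⟨k, hk, hk', h2⟩⟩
    · rintro ⟨⟨j, hj, hj', hj''⟩, ⟨k, hk, hk', hk''⟩⟩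
      obtain ⟨h1, h2⟩ := (hpk j p k hj hk).2 ⟨hj'', hk''⟩
      exact ⟨⟨j, hj, hj', h1⟩, ⟨k, hk, hk', h2⟩⟩
  rw [← Fintype.card_eq]
  by_cases hp : ∀ p, ¬ (ForcedPos v h p ∧ ForcedNeg v h p)
  · have h1 := card_signs_mul v hv h hp
    have h2 := card_signs_mul v' hv' h (fun p hq => hp p ((hiff p).2 hq))
    exact Nat.eq_of_mul_eq_mul_right (by positivity) (h1.trans h2.symm)
  · push Not at hp
    obtain ⟨p, h1, h2⟩ := hp
    obtain ⟨h1', h2'⟩ := (hiff p).1 ⟨h1, h2⟩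
    have e : IsEmpty (∀ p, AdmissibleSign v h p) :=
      ⟨fun s => by simpa [(s p).2.1 h1] using (s p).2.2 h2⟩
    have e' : IsEmpty (∀ p, AdmissibleSign v' h p) :=
      ⟨fun s => by simpa [(s p).2.1 h1'] using (s p).2.2 h2'⟩
    rw [Fintype.card_eq_zero, Fintype.card_eq_zero]

lemma Fin.val_add_one_eq_iff {n : ℕ} [NeZero n] (j k : Fin n) :
    (j : ℕ) + 1 = k ↔ k = j + 1 ∧ j + 1 ≠ 0 := by
  obtain ⟨m, rfl⟩ := Nat.exists_eq_succ_of_ne_zero (NeZero.ne n)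
  rw [Ne, Fin.ext_iff, Fin.ext_iff, Fin.val_add_one]
  have := j.2
  have := k.2
  split_ifs with hj <;> simp
  · subst hj
    simp
    omega
  · omega

/-- Being enriched for a rotation of `w` is a condition on all cyclically adjacent positions
except at the cut. -/
lemma isEnrichedLin_rotF_iff {n : ℕ} [NeZero n] (w : Fin n → Fin n) (i : Fin n) (f : Fin n → ℤ) :
    IsEnrichedLin n (rotF n i w) f ↔ (∀ x, f x ≠ 0) ∧
      ∀ c, c + 1 ≠ i → AdjacentOK (w c) (w (c + 1)) (f (w c)) (f (w (c + 1))) := by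
  refine and_congr_right fun _ => ⟨fun H c hc => ?_, fun H j k hjk => ?_⟩
  · have := H (c - i) (c + 1 - i) ((Fin.val_add_one_eq_iff _ _).2 ⟨by abel, fun h0 => hc ?_⟩)
    · simpa [rotF, AdjacentOK] using this
    · have : c + 1 - i = 0 := by rw [← h0]; abel
      exact sub_eq_zero.1 this
  · obtain ⟨rfl, h0⟩ := (Fin.val_add_one_eq_iff _ _).1 hjk
    have := H (j + i) (fun h1 => h0 ?_)
    · have e : j + i + 1 = j + 1 + i := by abel
      rw [e] at this
      exact this
    · have e : j + 1 + i = i := by rw [add_right_comm, h1]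
      simpa using e

/-- A cyclically weakly increasing function is constant. -/
lemma eq_of_cyclic_le {n : ℕ} [NeZero n] (x : Fin n → ℤ) (hx : ∀ c, x c ≤ x (c + 1))
    (c : Fin n) : x c = x 0 := by
  have hsum : ∑ c, x c = ∑ c, x (c + 1) := (Equiv.sum_comp (Equiv.addRight (1 : Fin n)) x).symm
  have heq := (Finset.sum_eq_sum_iff_of_le fun c _ => hx c).1 hsum
  obtain ⟨m, hm⟩ := c
  induction m with
  | zero => rfl
  | succ m ih =>
    have hm' : m < n := by omega
    rw [← ih hm', heq ⟨m, hm'⟩ (Finset.mem_univ _),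
      ((Fin.val_add_one_eq_iff ⟨m, hm'⟩ ⟨m + 1, hm⟩).1 rfl).1]

/-- The sets of enriched partitions of distinct rotations are disjoint. -/
lemma rotation_unique {n : ℕ} [NeZero n] (w : Equiv.Perm (Fin n)) (f : Fin n → ℤ) (i i' : Fin n)
    (hi : IsEnrichedLin n (rotF n i w) f) (hi' : IsEnrichedLin n (rotF n i' w) f) : i = i' := by
  by_contra hne
  rw [isEnrichedLin_rotF_iff] at hi hi'
  have H : ∀ c, AdjacentOK (w c) (w (c + 1)) (f (w c)) (f (w (c + 1))) := by
    intro c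
    by_cases hc : c + 1 = i
    · exact hi'.2 c (hc ▸ hne)
    · exact hi.2 c hc
  have h0 := hi.1
  have hconst := eq_of_cyclic_le
    (fun c => 2 * ((f (w c)).natAbs : ℤ) + if 0 < f (w c) then 1 else 0) (fun c => by
      have h1 := (H c).1
      have h2 := h0 (w c)
      have h3 := h0 (w (c + 1))
      simp only [ple, Int.abs_eq_natAbs] at h1
      rcases h1 with h1 | h1 | h1
      · simp [h1]
      · split_ifs <;> omega
      · split_ifs <;> omega)
  have hf : ∀ c, f (w c) = f (w 0) := by
    intro c
    have h1 := hconst c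
    have h2 := h0 (w c)
    have h3 := h0 (w 0)
    split_ifs at h1 <;> omega
  have hstep : ∀ c, f (w c) = f (w (c + 1)) := fun c => (hf c).trans (hf _).symm
  rcases lt_or_gt_of_ne (h0 (w 0)) with hs | hs
  · obtain ⟨c, hc⟩ := Finite.exists_min w
    exact absurd (((H c).2 (hstep c)).2 (by rw [hf c]; exact hs)) (not_lt.2 (hc _))
  · obtain ⟨c, hc⟩ := Finite.exists_max w
    exact absurd (((H c).2 (hstep c)).1 (by rw [hf c]; exact hs)) (not_lt.2 (hc _))

/-- The possible sequences of absolute values of an enriched partition of weight `d`. -/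
abbrev AbsSeq (n : ℕ) (d : ℕ →₀ ℕ) : Type :=
  {h : Fin n → ℕ // Monotone h ∧ (∀ j, h j ≠ 0) ∧
    ∀ m : ℕ, (Finset.univ.filter (fun j => h j = m)).card = d m}

/-- The toric enriched partitions of weight `d`. -/
abbrev ToricEnriched (n : ℕ) (w : Fin n → Fin n) (d : ℕ →₀ ℕ) : Type :=
  {f : Fin n → ℤ // (∃ i : Fin n, IsEnrichedLin n (rotF n i w) f) ∧
    (∀ m : ℕ, (Finset.univ.filter (fun i => (f i).natAbs = m)).card = d m)}

/-- The integer with absolute value `m`, positive iff `b` is `true`. -/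
def signed (b : Bool) (m : ℕ) : ℤ := if b then m else -m

@[simp] lemma natAbs_signed (b : Bool) (m : ℕ) : (signed b m).natAbs = m := by
  cases b <;> simp [signed]

lemma signed_pos_iff {b : Bool} {m : ℕ} (hm : m ≠ 0) : 0 < signed b m ↔ b = true := by
  cases b <;> simp [signed]; omega

lemma signed_neg_iff {b : Bool} {m : ℕ} (hm : m ≠ 0) : signed b m < 0 ↔ b = false := by
  cases b <;> simp [signed]; omega

lemma signed_decide_natAbs (a : ℤ) : signed (decide (0 < a)) a.natAbs = a := by
  by_cases ha : 0 < a <;> simp only [signed, ha, decide_true, decide_false, if_true,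
    Bool.false_eq_true, if_false] <;> omega

lemma isEnrichedLin_iff_natAbs {n : ℕ} (v : Fin n → Fin n) (hv : Function.Injective v)
    (f : Fin n → ℤ) (h0 : ∀ x, f x ≠ 0) :
    IsEnrichedLin n v f ↔ Monotone (fun j => (f (v j)).natAbs) ∧
      ∀ p, (ForcedPos v (fun j => (f (v j)).natAbs) p → 0 < f (v p)) ∧
        (ForcedNeg v (fun j => (f (v j)).natAbs) p → f (v p) < 0) := by
  have key : IsEnrichedLin n v f ↔ ∀ j k : Fin n, (j : ℕ) + 1 = k →
      (f (v j)).natAbs ≤ (f (v k)).natAbs ∧ ((f (v j)).natAbs = (f (v k)).natAbs →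
        (v j < v k → 0 < f (v k)) ∧ (v k < v j → f (v j) < 0)) := by
    refine (and_iff_right h0).trans ?_
    refine forall_congr' fun j => forall_congr' fun k => imp_congr_right fun hjk => ?_
    refine adjacentOK_iff (fun he => ?_) (h0 _)
    have := hv he
    subst this
    omega
  rw [key]
  constructor
  · intro H
    refine ⟨?_, fun p => ⟨?_, ?_⟩⟩
    · cases n with
      | zero => exact fun a => a.elim0
      | succ n => exact Fin.monotone_iff_le_succ.2 fun j => (H _ _ (by simp)).1
    · rintro ⟨j, hj, he, hlt⟩
      exact ((H j p hj).2 he).1 hlt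
    · rintro ⟨k, hk, he, hlt⟩
      exact ((H p k hk).2 he).2 hlt
  · rintro ⟨hm, H⟩ j k hjk
    exact ⟨hm (Fin.le_def.2 (by omega)), fun he =>
      ⟨fun hlt => (H k).1 ⟨j, hjk, he, hlt⟩, fun hlt => (H j).2 ⟨k, hjk, he, hlt⟩⟩⟩

lemma card_filter_comp_perm {n : ℕ} (v : Equiv.Perm (Fin n)) (g : Fin n → ℕ) (m : ℕ) :
    (Finset.univ.filter (fun j => g (v j) = m)).card =
      (Finset.univ.filter (fun x => g x = m)).card := by
  refine Finset.card_bij (fun j _ => v j) (by simp) (fun _ _ _ _ he => v.injective he) ?_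
  intro x hx
  exact ⟨v.symm x, by simpa using hx, by simp⟩

/-- The rotation of `w` as a permutation. -/
def rotPerm {n : ℕ} [NeZero n] (w : Equiv.Perm (Fin n)) (i : Fin n) : Equiv.Perm (Fin n) :=
  (Equiv.addRight i).trans w

/-- A toric enriched partition amounts to a rotation, a sequence of absolute values, and a choice
of admissible signs. -/
lemma nonempty_toricEnriched_equiv {n : ℕ} [NeZero n] (w : Equiv.Perm (Fin n)) (d : ℕ →₀ ℕ) :
    Nonempty ((Σ q : Fin n × AbsSeq n d, ∀ p, AdmissibleSign (rotPerm w q.1) q.2.1 p) ≃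
      ToricEnriched n w d) := by
  let F : (Σ q : Fin n × AbsSeq n d, ∀ p, AdmissibleSign (rotPerm w q.1) q.2.1 p) →
      Fin n → ℤ := fun t x =>
    signed (t.2 ((rotPerm w t.1.1).symm x)).1 (t.1.2.1 ((rotPerm w t.1.1).symm x))
  have hF : ∀ t j, F t (rotPerm w t.1.1 j) = signed (t.2 j).1 (t.1.2.1 j) := by
    intro t j
    simp only [F]
    rw [Equiv.symm_apply_apply]
  have hFabs : ∀ t, (fun j => (F t (rotPerm w t.1.1 j)).natAbs) = t.1.2.1 := by
    intro t
    funext j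
    rw [hF, natAbs_signed]
  have hE : ∀ t, IsEnrichedLin n (rotF n t.1.1 w) (F t) := by
    intro t
    refine (isEnrichedLin_iff_natAbs (rotPerm w t.1.1) (rotPerm w t.1.1).injective (F t) ?_).2 ?_
    · intro x hx
      exact t.1.2.2.2.1 ((rotPerm w t.1.1).symm x) (by simpa [F] using congrArg Int.natAbs hx)
    · rw [hFabs t]
      refine ⟨t.1.2.2.1, fun p => ?_⟩
      rw [hF, signed_pos_iff (t.1.2.2.2.1 p), signed_neg_iff (t.1.2.2.2.1 p)]
      exact (t.2 p).2
  have hW : ∀ t, ∀ m : ℕ, (Finset.univ.filter (fun x => (F t x).natAbs = m)).card = d m := by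
    intro t m
    rw [← t.1.2.2.2.2 m, ← hFabs t]
    exact (card_filter_comp_perm (rotPerm w t.1.1) (fun x => (F t x).natAbs) m).symm
  refine ⟨Equiv.ofBijective (fun t => ⟨F t, ⟨t.1.1, hE t⟩, hW t⟩) ⟨?_, ?_⟩⟩
  · intro t t' he
    have he' : F t = F t' := congrArg Subtype.val he
    have hi : t.1.1 = t'.1.1 := rotation_unique w (F t) _ _ (hE t) (he' ▸ hE t')
    have hh : t.1.2 = t'.1.2 := by
      apply Subtype.ext
      rw [← hFabs t, ← hFabs t', he', hi]
    have hs : ∀ j, (t.2 j).1 = (t'.2 j).1 := by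
      intro j
      rw [Bool.eq_iff_iff, ← signed_pos_iff (t.1.2.2.2.1 j), ← signed_pos_iff (t'.1.2.2.2.1 j),
        ← hF, ← hF, he', hi]
    obtain ⟨⟨i, h⟩, s⟩ := t
    obtain ⟨⟨i', h'⟩, s'⟩ := t'
    simp only at hi hh hs
    subst hi hh
    congr 1
    funext j
    exact Subtype.ext (hs j)
  · rintro ⟨f, ⟨i, hi⟩, hw⟩
    have h0 := hi.1
    obtain ⟨hm, hs⟩ := (isEnrichedLin_iff_natAbs (rotPerm w i) (rotPerm w i).injective f h0).1 hi
    refine ⟨⟨(i, ⟨fun j => (f (rotPerm w i j)).natAbs, hm, fun j => by simpa using h0 _,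
      fun m => ?_⟩), fun p => ⟨decide (0 < f (rotPerm w i p)), fun hp => ?_, fun hp => ?_⟩⟩, ?_⟩
    · rw [← hw m]
      exact card_filter_comp_perm (rotPerm w i) (fun x => (f x).natAbs) m
    · exact decide_eq_true ((hs p).1 hp)
    · exact decide_eq_false (not_lt.2 ((hs p).2 hp).le)
    · apply Subtype.ext
      funext x
      simp [F, signed_decide_natAbs]

/-- if `cPk w'` is a cyclic shift of `cPk w`, then for every finitely
supported weight `d : ℙ → ℕ` the number of `f ∈ E^tor([w])` with `d_f = d` equals
the number of `f ∈ E^tor([w'])` with `d_f = d`; equivalently, `Δ^cyc_{[w]}`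
depends only on `cPk w` up to cyclic shift. -/
theorem stmt9 (n : ℕ) [NeZero n] (w w' : Equiv.Perm (Fin n))
    (h : ∃ i : Fin n, cPkF n ⇑w' = (cPkF n ⇑w).image (· + i))
    (d : ℕ →₀ ℕ) (hd0 : d 0 = 0) :
    Nat.card {f : Fin n → ℤ //
        (∃ i : Fin n, IsEnrichedLin n (rotF n i ⇑w) f) ∧
        (∀ m : ℕ, (Finset.univ.filter (fun i => (f i).natAbs = m)).card = d m)} =
    Nat.card {f : Fin n → ℤ //
        (∃ i : Fin n, IsEnrichedLin n (rotF n i ⇑w') f) ∧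
        (∀ m : ℕ, (Finset.univ.filter (fun i => (f i).natAbs = m)).card = d m)} := by
  obtain ⟨i₀, hi₀⟩ := h
  obtain ⟨e⟩ := nonempty_toricEnriched_equiv w d
  obtain ⟨e'⟩ := nonempty_toricEnriched_equiv w' d
  have hpk : ∀ c, (w (c - 1) < w c ∧ w (c + 1) < w c) ↔
      (w' (c + i₀ - 1) < w' (c + i₀) ∧ w' (c + i₀ + 1) < w' (c + i₀)) := by
    intro c
    have hc : c + i₀ ∈ cPkF n w' ↔ c ∈ cPkF n w := by
      rw [hi₀]
      simp
    simpa [cPkF] using hc.symm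
  have hsigns : ∀ q : Fin n × AbsSeq n d, Nonempty ((∀ p, AdmissibleSign (rotPerm w q.1) q.2.1 p) ≃
      (∀ p, AdmissibleSign (rotPerm w' (q.1 + i₀)) q.2.1 p)) := by
    rintro ⟨i, a⟩
    refine nonempty_signs_equiv _ _ (Equiv.injective _) (Equiv.injective _) _ ?_
    intro j p k hjp hpk'
    obtain ⟨rfl, -⟩ := (Fin.val_add_one_eq_iff _ _).1 hjp
    obtain ⟨rfl, -⟩ := (Fin.val_add_one_eq_iff _ _).1 hpk'
    have := hpk (j + 1 + i)
    have e1 : j + 1 + i - 1 = j + i := by abel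
    have e2 : j + 1 + i + 1 = j + 1 + 1 + i := by abel
    have e3 : j + 1 + i + i₀ - 1 = j + (i + i₀) := by abel
    have e4 : j + 1 + i + i₀ + 1 = j + 1 + 1 + (i + i₀) := by abel
    have e5 : j + 1 + i + i₀ = j + 1 + (i + i₀) := by abel
    rw [e3, e4, e1, e2, e5] at this
    exact this
  exact Nat.card_congr (e.symm.trans ((Equiv.sigmaCongr
    ((Equiv.addRight i₀).prodCongr (Equiv.refl _)) fun q => (hsigns q).some).trans e'))
end

section
/- Order polynomial of enriched w-partitions: let w ∈ S_n with n ≥ 1 and let m ≥ 0 be an integer. Then the number of enriched w-partitions f with |f(i)| ≤ m for all i ∈ [n] equals 2^{2·pk(w)+1} · Σ_{k=0}^{m−1−pk(w)} C(n+k, k) · C(n − 2·pk(w) − 1, m − 1 − pk(w) − k), where C(a,b) denotes the binomial coefficient, C(n+k,k) = ((n+1 multichoose k)) counts multisets of size k on an (n+1)-element set, and the sum is empty (so the count is 0) when m − 1 − pk(w) < 0. -/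
section

open Finset PowerSeries

/-- Monotone words `g` of length `n` with letters below `b` in which equal neighbours
`g (k - 1) = g k` are allowed only if that letter is odd and `d k` fails, or even and `d k` holds. -/
def enrichedWords (d : ℕ → Prop) (n b : ℕ) : Set (Fin n → ℕ) :=
  {g | (∀ i, g i < b) ∧ Monotone g ∧
    ∀ j k : Fin n, (j : ℕ) + 1 = k → g j = g k → (Odd (g k) ↔ ¬ d k)}

lemma enrichedWords_finite (d : ℕ → Prop) (n b : ℕ) : (enrichedWords d n b).Finite := by
  refine (Set.Finite.pi' (fun _ : Fin n => Set.finite_Iio b)).subset ?_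
  intro g hg i
  exact hg.1 i

lemma ncard_enrichedWords_zero_left (d : ℕ → Prop) (b : ℕ) :
    (enrichedWords d 0 b).ncard = 1 := by
  have : enrichedWords d 0 b = Set.univ := by
    ext g
    simp [enrichedWords, Subsingleton.monotone]
  rw [this, Set.ncard_univ]
  simp

lemma ncard_enrichedWords_zero_right (d : ℕ → Prop) (n : ℕ) :
    (enrichedWords d (n + 1) 0).ncard = 0 := by
  have : enrichedWords d (n + 1) 0 = ∅ := by
    ext g
    simp [enrichedWords]
  rw [this, Set.ncard_empty]

lemma snoc_mem_enrichedWords_iff (d : ℕ → Prop) [DecidablePred d] (n b c : ℕ)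
    (hc : c = if Odd b ↔ ¬ d n then b + 1 else b)
    (g : Fin n → ℕ) :
    (Fin.snoc g b : Fin (n + 1) → ℕ) ∈ enrichedWords d (n + 1) (b + 1) ↔
      g ∈ enrichedWords d n c := by
  constructor
  · rintro ⟨hb, hmono, heq⟩
    have hm : Monotone g := fun i j hij => by
      simpa using hmono (Fin.castSucc_le_castSucc_iff.2 hij)
    refine ⟨fun i => ?_, hm, fun j k hjk h => ?_⟩
    · have hi := hb i.castSucc
      rw [Fin.snoc_castSucc] at hi
      split_ifs at hc with h
      · omega
      · obtain ⟨n, rfl⟩ : ∃ r, n = r + 1 := ⟨n - 1, by have := i.2; omega⟩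
        have h1 := heq (Fin.last n).castSucc (Fin.last (n + 1)) (by simp)
        rw [Fin.snoc_castSucc, Fin.snoc_last] at h1
        have h2 := hm (Fin.le_last i)
        have h3 := hb (Fin.last n).castSucc
        rw [Fin.snoc_castSucc] at h3
        have h4 : g (Fin.last n) ≠ b := fun e => h (h1 e)
        omega
    · have := heq j.castSucc k.castSucc (by simpa using hjk)
      simp only [Fin.snoc_castSucc] at this
      exact this h
  · rintro ⟨hb, hmono, heq⟩
    have hcb : c ≤ b + 1 := by split_ifs at hc <;> omega
    refine ⟨fun i => ?_, ?_, fun j k hjk => ?_⟩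
    · refine Fin.lastCases (by simp) (fun i => ?_) i
      rw [Fin.snoc_castSucc]
      exact (hb i).trans_le hcb
    · intro i j
      refine Fin.lastCases ?_ (fun j => ?_) j
      · intro _
        refine Fin.lastCases le_rfl (fun i => ?_) i
        rw [Fin.snoc_castSucc, Fin.snoc_last]
        have := hb i
        omega
      · refine Fin.lastCases (fun h => ?_) (fun i h => ?_) i
        · exact absurd h (not_le.2 (Fin.castSucc_lt_last j))
        · rw [Fin.snoc_castSucc, Fin.snoc_castSucc]
          exact hmono (Fin.castSucc_le_castSucc_iff.1 h)
    · obtain ⟨j, rfl⟩ : ∃ j' : Fin n, j = j'.castSucc :=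
        ⟨⟨j, by have := k.2; omega⟩, rfl⟩
      revert hjk
      refine Fin.lastCases (fun hjk h => ?_) (fun k hjk h => ?_) k
      · rw [Fin.snoc_castSucc, Fin.snoc_last] at h
        rw [Fin.snoc_last, Fin.val_last]
        by_contra hne
        rw [if_neg hne] at hc
        have := hb j
        omega
      · rw [Fin.snoc_castSucc, Fin.snoc_castSucc] at h
        rw [Fin.snoc_castSucc]
        exact heq j k hjk h

lemma ncard_enrichedWords_succ (d : ℕ → Prop) [DecidablePred d] (n b c : ℕ)
    (hc : c = if Odd b ↔ ¬ d n then b + 1 else b) :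
    (enrichedWords d (n + 1) (b + 1)).ncard =
      (enrichedWords d (n + 1) b).ncard + (enrichedWords d n c).ncard := by
  have hinj : Function.Injective (fun g : Fin n → ℕ => (Fin.snoc g b : Fin (n + 1) → ℕ)) :=
    fun g g' h => (Fin.snoc_injective2 h).1
  have hunion : enrichedWords d (n + 1) (b + 1) = enrichedWords d (n + 1) b ∪
      (fun g : Fin n → ℕ => (Fin.snoc g b : Fin (n + 1) → ℕ)) '' enrichedWords d n c := by
    ext g
    constructor
    · intro hg
      by_cases hl : g (Fin.last n) = b
      · right
        refine ⟨Fin.init g, ?_, ?_⟩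
        · rw [← snoc_mem_enrichedWords_iff d n b c hc, ← hl, Fin.snoc_init_self]
          rwa [hl]
        · simp only [← hl, Fin.snoc_init_self]
      · left
        refine ⟨fun i => ?_, hg.2⟩
        have h1 := hg.2.1 (Fin.le_last i)
        have h2 := hg.1 (Fin.last n)
        omega
    · rintro (hg | ⟨g, hg, rfl⟩)
      · exact ⟨fun i => (hg.1 i).trans (Nat.lt_succ_self b), hg.2⟩
      · exact (snoc_mem_enrichedWords_iff d n b c hc g).2 hg
  rw [hunion, Set.ncard_union_eq _ (enrichedWords_finite ..)
    ((enrichedWords_finite ..).image _), Set.ncard_image_of_injective _ hinj]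
  rw [Set.disjoint_left]
  rintro _ hg ⟨g, -, rfl⟩
  simpa using hg.1 (Fin.last n)

/-- Generating function of the number of enriched words with letters below `2 * m + r`. -/
noncomputable def enrichedSeries (d : ℕ → Prop) (r n : ℕ) : ℤ⟦X⟧ :=
  PowerSeries.mk fun m => ((enrichedWords d n (2 * m + r)).ncard : ℤ)

lemma enrichedSeries_one_of_pos (d : ℕ → Prop) [DecidablePred d] (n : ℕ) (h : d n) :
    enrichedSeries d 1 (n + 1) = enrichedSeries d 0 (n + 1) + enrichedSeries d 1 n := by
  ext m
  simp only [enrichedSeries, coeff_mk, map_add]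
  rw [ncard_enrichedWords_succ d n (2 * m) (2 * m + 1) (by simp [h])]
  push_cast
  rfl

lemma enrichedSeries_one_of_neg (d : ℕ → Prop) [DecidablePred d] (n : ℕ) (h : ¬ d n) :
    enrichedSeries d 1 (n + 1) = enrichedSeries d 0 (n + 1) + enrichedSeries d 0 n := by
  ext m
  simp only [enrichedSeries, coeff_mk, map_add]
  rw [ncard_enrichedWords_succ d n (2 * m) (2 * m) (by simp [h])]
  push_cast
  rfl

lemma enrichedSeries_zero_of_pos (d : ℕ → Prop) [DecidablePred d] (n : ℕ) (h : d n) :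
    enrichedSeries d 0 (n + 1) * (1 - X) = 2 * (enrichedSeries d 1 n * X) := by
  rw [mul_sub, mul_one, two_mul]
  ext m
  rcases m with _ | m
  · simp [enrichedSeries, ncard_enrichedWords_zero_right]
  · simp only [map_sub, map_add, coeff_succ_mul_X, enrichedSeries, coeff_mk]
    rw [show 2 * (m + 1) + 0 = 2 * m + 1 + 1 by ring,
      ncard_enrichedWords_succ d n (2 * m + 1) (2 * m + 1) (by simp [h]),
      ncard_enrichedWords_succ d n (2 * m) (2 * m + 1) (by simp [h])]
    simp only [add_zero]
    push_cast
    ring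

lemma enrichedSeries_zero_of_neg (d : ℕ → Prop) [DecidablePred d] (n : ℕ) (h : ¬ d (n + 1)) :
    enrichedSeries d 0 (n + 2) * (1 - X) = enrichedSeries d 0 (n + 1) * (1 + X) := by
  rw [mul_sub, mul_one, mul_add, mul_one]
  ext m
  rcases m with _ | m
  · simp [enrichedSeries, ncard_enrichedWords_zero_right]
  · simp only [map_sub, map_add, coeff_succ_mul_X, enrichedSeries, coeff_mk]
    rw [show 2 * (m + 1) + 0 = 2 * m + 1 + 1 by ring,
      ncard_enrichedWords_succ d (n + 1) (2 * m + 1) (2 * m + 1 + 1) (by simp [h]),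
      ncard_enrichedWords_succ d (n + 1) (2 * m) (2 * m) (by simp [h])]
    simp only [add_zero]
    push_cast
    ring

/-- Number of `k` with `k + 1 < n` such that `d k` fails and `d (k + 1)` holds. -/
def peakCount (d : ℕ → Prop) [DecidablePred d] (n : ℕ) : ℕ :=
  #{k ∈ range (n - 1) | ¬ d k ∧ d (k + 1)}

lemma peakCount_add_two (d : ℕ → Prop) [DecidablePred d] (n : ℕ) :
    peakCount d (n + 2) = peakCount d (n + 1) + if ¬ d n ∧ d (n + 1) then 1 else 0 := by
  simp only [peakCount, Nat.add_sub_cancel, show n + 2 - 1 = n + 1 by omega]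
  rw [range_add_one, filter_insert]
  split_ifs <;> simp

lemma enrichedSeries_mul_one_sub_pow (d : ℕ → Prop) [DecidablePred d] (h0 : d 0) (n : ℕ) :
    ∃ q, n = 2 * peakCount d (n + 1) + q ∧
      enrichedSeries d 0 (n + 1) * (1 - X) ^ (n + 2) =
        2 ^ (2 * peakCount d (n + 1) + 1) * X ^ (peakCount d (n + 1) + 1) * (1 + X) ^ q ∧
      (d n → enrichedSeries d 1 (n + 1) * (1 - X) ^ (n + 2) =
        2 ^ (2 * peakCount d (n + 1)) * X ^ peakCount d (n + 1) * (1 + X) ^ (q + 1)) ∧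
      (¬ d n → ∃ r, q = r + 1 ∧ enrichedSeries d 1 (n + 1) * (1 - X) ^ (n + 2) =
        2 ^ (2 * peakCount d (n + 1) + 2) * X ^ (peakCount d (n + 1) + 1) * (1 + X) ^ r) := by
  induction n with
  | zero =>
    have hs : enrichedSeries d 1 0 * (1 - X) = 1 := by
      have : enrichedSeries d 1 0 = PowerSeries.mk 1 := by
        ext m
        simp [enrichedSeries, ncard_enrichedWords_zero_left]
      rw [this, mk_one_mul_one_sub_eq_one]
    have hz := enrichedSeries_zero_of_pos d 0 h0
    have hp : peakCount d (0 + 1) = 0 := by simp [peakCount]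
    rw [hp]
    refine ⟨0, rfl, ?_, fun _ => ?_, fun h => absurd h0 h⟩
    · linear_combination (1 - X) * hz + 2 * X * hs
    · rw [enrichedSeries_one_of_pos d 0 h0]
      linear_combination (1 - X) * hz + (2 * X + (1 - X)) * hs
  | succ n ih =>
    obtain ⟨q, hq, hP, hpos, hneg⟩ := ih
    have hpk := peakCount_add_two d n
    rw [show n + 1 + 1 = n + 2 by rfl]
    generalize peakCount d (n + 1) = p at *
    by_cases h1 : d (n + 1)
    · have hz := enrichedSeries_zero_of_pos d (n + 1) h1
      have hN := enrichedSeries_one_of_pos d (n + 1) h1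
      by_cases h : d n
      · rw [if_neg (by tauto), add_zero] at hpk
        have hN' := hpos h
        rw [hpk]
        refine ⟨q + 1, by omega, ?_, fun _ => ?_, fun h' => absurd h1 h'⟩
        · linear_combination (1 - X) ^ (n + 2) * hz + 2 * X * hN'
        · rw [hN]
          linear_combination (1 - X) ^ (n + 2) * hz + (1 + X) * hN'
      · rw [if_pos ⟨h, h1⟩] at hpk
        obtain ⟨r, rfl, hN'⟩ := hneg h
        rw [hpk]
        refine ⟨r, by omega, ?_, fun _ => ?_, fun h' => absurd h1 h'⟩
        · linear_combination (1 - X) ^ (n + 2) * hz + 2 * X * hN'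
        · rw [hN]
          linear_combination (1 - X) ^ (n + 2) * hz + (1 + X) * hN'
    · have hz := enrichedSeries_zero_of_neg d n h1
      have hN := enrichedSeries_one_of_neg d (n + 1) h1
      rw [if_neg (by tauto), add_zero] at hpk
      rw [hpk]
      refine ⟨q + 1, by omega, ?_, fun h' => absurd h' h1, fun _ => ⟨q, rfl, ?_⟩⟩
      · linear_combination (1 - X) ^ (n + 2) * hz + (1 + X) * hP
      · rw [hN]
        linear_combination (1 - X) ^ (n + 2) * hz + 2 * hP

theorem ncard_enrichedWords (d : ℕ → Prop) [DecidablePred d] (h0 : d 0) (n m : ℕ) :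
    (enrichedWords d (n + 1) (2 * m)).ncard =
      2 ^ (2 * peakCount d (n + 1) + 1) *
        ∑ k ∈ range (m - peakCount d (n + 1)),
          (n + 1 + k).choose k *
            (n + 1 - 2 * peakCount d (n + 1) - 1).choose (m - 1 - peakCount d (n + 1) - k) := by
  obtain ⟨q, hq, hP, -, -⟩ := enrichedSeries_mul_one_sub_pow d h0 n
  generalize peakCount d (n + 1) = p at *
  rw [show n + 1 - 2 * p - 1 = q by omega]
  have hinv : (1 - X : ℤ⟦X⟧) ^ (n + 2) *
      PowerSeries.mk (fun k => ((n + 1 + k).choose k : ℤ)) = 1 := by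
    have h := mk_add_choose_mul_one_sub_pow_eq_one ℤ (n + 1)
    simp only [Nat.choose_symm_add] at h
    rw [mul_comm, h]
  have hS : enrichedSeries d 0 (n + 1) = C ((2 : ℤ) ^ (2 * p + 1)) * (X ^ (p + 1) *
      (PowerSeries.mk (fun k => ((n + 1 + k).choose k : ℤ)) * (1 + X) ^ q)) := by
    have hC : C ((2 : ℤ) ^ (2 * p + 1)) = (2 : ℤ⟦X⟧) ^ (2 * p + 1) := by simp
    rw [hC]
    linear_combination (PowerSeries.mk (fun k => ((n + 1 + k).choose k : ℤ))) * hP -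
      enrichedSeries d 0 (n + 1) * hinv
  have hm := congrArg (coeff m) hS
  rw [coeff_C_mul, coeff_X_pow_mul'] at hm
  simp only [enrichedSeries, coeff_mk, add_zero] at hm
  split_ifs at hm with hpm
  · rw [coeff_mul, Finset.Nat.sum_antidiagonal_eq_sum_range_succ_mk] at hm
    rw [show m - p = (m - (p + 1)).succ by omega]
    zify
    rw [hm]
    congr 1
    refine sum_congr rfl fun k _ => ?_
    rw [show m - 1 - p - k = m - (p + 1) - k by omega, coeff_mk]
    congr 1
    have : ((1 + X : ℤ⟦X⟧)) ^ q = (((1 + Polynomial.X) ^ q : Polynomial ℤ) : ℤ⟦X⟧) := by simp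
    rw [this, Polynomial.coeff_coe, Polynomial.coeff_one_add_X_pow]
  · rw [show m - p = 0 by omega]
    simpa using hm

/-- The `x`-th element of `-1 ≺ 1 ≺ -2 ≺ 2 ≺ ⋯`. -/
def nthLetter (x : ℕ) : ℤ := if Odd x then (x / 2 : ℕ) + 1 else -((x / 2 : ℕ) + 1)

/-- The position of a nonzero integer in `-1 ≺ 1 ≺ -2 ≺ 2 ≺ ⋯`. -/
def letterIndex (a : ℤ) : ℕ := if 0 < a then 2 * a.natAbs - 1 else 2 * a.natAbs - 2

lemma nthLetter_letterIndex {a : ℤ} (ha : a ≠ 0) : nthLetter (letterIndex a) = a := by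
  simp only [nthLetter, letterIndex, Nat.odd_iff]
  split_ifs <;> omega

lemma letterIndex_nthLetter (x : ℕ) : letterIndex (nthLetter x) = x := by
  simp only [nthLetter, letterIndex, Nat.odd_iff]
  split_ifs <;> omega

lemma nthLetter_ne_zero (x : ℕ) : nthLetter x ≠ 0 := by
  simp only [nthLetter]
  split_ifs <;> omega

lemma nthLetter_injective : Function.Injective nthLetter :=
  Function.LeftInverse.injective letterIndex_nthLetter

lemma nthLetter_pos_iff (x : ℕ) : 0 < nthLetter x ↔ Odd x := by
  simp only [nthLetter]
  split_ifs with h <;> simp only [h, iff_true, iff_false] <;> omega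

lemma natAbs_nthLetter_le_iff (x m : ℕ) : (nthLetter x).natAbs ≤ m ↔ x < 2 * m := by
  simp only [nthLetter, Nat.odd_iff]
  split_ifs <;> omega

lemma ple_nthLetter_iff (x y : ℕ) : ple (nthLetter x) (nthLetter y) ↔ x ≤ y := by
  simp only [ple, nthLetter, Nat.odd_iff, Int.abs_eq_natAbs]
  split_ifs <;> omega

/-- Descents of a word ending at position `k`; position `0` counts as a descent. -/
def descentAt (n : ℕ) (v : Fin n → Fin n) (k : ℕ) : Prop :=
  k = 0 ∨ ∃ i j : Fin n, (i : ℕ) + 1 = j ∧ (j : ℕ) = k ∧ v j < v i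

lemma descentAt_iff {n : ℕ} (v : Fin n → Fin n) {i j : Fin n} (h : (i : ℕ) + 1 = j) :
    descentAt n v j ↔ v j < v i := by
  constructor
  · rintro (h0 | ⟨i', j', h1, h2, h3⟩)
    · omega
    · obtain rfl : j' = j := Fin.ext h2
      obtain rfl : i' = i := Fin.ext (by omega)
      exact h3
  · exact fun hv => Or.inr ⟨i, j, h, rfl, hv⟩

lemma not_descentAt_iff {n : ℕ} {v : Fin n → Fin n} (hv : v.Injective) {i j : Fin n}
    (h : (i : ℕ) + 1 = j) : ¬ descentAt n v j ↔ v i < v j := by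
  have hne : v i ≠ v j := fun e => by
    have := congrArg Fin.val (hv e)
    omega
  rw [descentAt_iff v h, not_lt, le_iff_lt_or_eq, or_iff_left hne]

lemma isEnrichedLin_nthLetter_iff {n : ℕ} (w : Equiv.Perm (Fin n)) (m : ℕ) (g : Fin n → ℕ) :
    (IsEnrichedLin n w (fun i => nthLetter (g (w.symm i))) ∧
      ∀ i, (nthLetter (g (w.symm i))).natAbs ≤ m) ↔
      g ∈ enrichedWords (descentAt n w) n (2 * m) := by
  have hmono : Monotone g ↔ ∀ j k : Fin n, (j : ℕ) + 1 = k → g j ≤ g k := by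
    constructor
    · exact fun h j k hjk => h (Fin.le_def.2 (by omega))
    · intro h
      rcases n with _ | n
      · exact Subsingleton.monotone g
      · exact Fin.monotone_iff_le_succ.2 fun i => h _ _ (by simp)
  have hadj : ∀ j k : Fin n, (j : ℕ) + 1 = k → g j = g k →
      (((0 < nthLetter (g j) → w j < w k) ∧ (nthLetter (g j) < 0 → w k < w j)) ↔
        (Odd (g k) ↔ ¬ descentAt n w k)) := by
    intro j k hjk he
    have h1 := descentAt_iff w hjk
    have h2 := not_descentAt_iff w.injective hjk
    have h3 := nthLetter_pos_iff (g k)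
    have h4 : nthLetter (g k) < 0 ↔ ¬ Odd (g k) := by
      rw [← h3, not_lt, le_iff_lt_or_eq, or_iff_left (nthLetter_ne_zero _)]
    rw [he, h3, h4]
    tauto
  simp only [IsEnrichedLin, enrichedWords, Set.mem_ofPred_eq, Equiv.symm_apply_apply,
    natAbs_nthLetter_le_iff, ple_nthLetter_iff, nthLetter_injective.eq_iff, hmono]
  constructor
  · rintro ⟨⟨-, h⟩, hb⟩
    exact ⟨fun i => by simpa using hb (w i), fun j k hjk => (h j k hjk).1,
      fun j k hjk he => (hadj j k hjk he).1 ((h j k hjk).2 he)⟩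
  · rintro ⟨hb, hle, h⟩
    exact ⟨⟨fun i => nthLetter_ne_zero _, fun j k hjk => ⟨hle j k hjk,
      fun he => (hadj j k hjk he).2 (h j k hjk he)⟩⟩, fun i => hb _⟩

lemma card_enriched_eq_ncard {n : ℕ} (w : Equiv.Perm (Fin n)) (m : ℕ) :
    Nat.card {f : Fin n → ℤ // IsEnrichedLin n w f ∧ ∀ i, (f i).natAbs ≤ m} =
      (enrichedWords (descentAt n w) n (2 * m)).ncard := by
  have hinj : Function.Injective
      (fun (g : Fin n → ℕ) (i : Fin n) => nthLetter (g (w.symm i))) := fun g g' h => by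
    funext i
    simpa [nthLetter_injective.eq_iff] using congrFun h (w i)
  rw [← Set.ncard_image_of_injective _ hinj, ← Nat.card_coe_set_eq]
  refine Nat.card_congr (Equiv.subtypeEquivRight fun f => ?_)
  constructor
  · intro hf
    have hfg : (fun i => nthLetter (letterIndex (f (w (w.symm i))))) = f := by
      funext i
      rw [Equiv.apply_symm_apply, nthLetter_letterIndex (hf.1.1 i)]
    refine ⟨fun j => letterIndex (f (w j)), ?_, hfg⟩
    rw [← isEnrichedLin_nthLetter_iff]
    have hfg' := congrFun hfg
    simpa only [hfg'] using hf
  · rintro ⟨g, hg, rfl⟩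
    exact (isEnrichedLin_nthLetter_iff w m g).2 hg

lemma card_PkF_eq_peakCount (n : ℕ) (w : Equiv.Perm (Fin (n + 1)))
    [DecidablePred (descentAt (n + 1) w)] :
    (PkF (n + 1) w).card = peakCount (descentAt (n + 1) w) (n + 1) := by
  rw [peakCount, ← card_map Fin.valEmbedding]
  congr 1
  have key : ∀ i : Fin (n + 1), i ∈ PkF (n + 1) w ↔
      (i : ℕ) < n ∧ ¬ descentAt (n + 1) w i ∧ descentAt (n + 1) w (i + 1) := by
    intro i
    simp only [PkF, mem_filter, mem_univ, true_and, Nat.add_sub_cancel]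
    by_cases hi0 : (i : ℕ) = 0
    · simp [hi0, descentAt]
    by_cases hin : (i : ℕ) < n
    · have hpred : ((i - 1 : Fin (n + 1)) : ℕ) + 1 = i := by
        have := Fin.val_sub_one_of_ne_zero (i := i) (fun h => hi0 (by simp [h]))
        omega
      have hsucc : ((i + 1 : Fin (n + 1)) : ℕ) = i + 1 :=
        Fin.val_add_one_of_lt (Fin.lt_def.2 (by simpa using hin))
      rw [not_descentAt_iff w.injective hpred, ← hsucc, descentAt_iff w hsucc.symm]
      simp [hin, Nat.pos_of_ne_zero hi0]
    · simp [hin]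
  ext k
  simp only [mem_map, key, Fin.valEmbedding_apply, mem_filter, mem_range, Nat.add_sub_cancel]
  constructor
  · rintro ⟨i, hi, rfl⟩
    exact hi
  · exact fun hk => ⟨⟨k, by omega⟩, hk, rfl⟩

end

/-- order polynomial of enriched `w`-partitions: for `w ∈ S_n`
(`n ≥ 1`) and `m ≥ 0`, the number of enriched `w`-partitions `f` with `|f i| ≤ m`
for all `i` equals
`2^{2·pk w + 1} · Σ_{k=0}^{m−1−pk w} C(n+k,k)·C(n−2·pk w−1, m−1−pk w−k)`
(the sum being empty when `m−1−pk w < 0`). -/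
theorem stmt15 (n : ℕ) [NeZero n] (w : Equiv.Perm (Fin n)) (m : ℕ) :
    Nat.card {f : Fin n → ℤ //
        IsEnrichedLin n ⇑w f ∧ ∀ i, (f i).natAbs ≤ m} =
      2 ^ (2 * (PkF n ⇑w).card + 1) *
        ∑ k ∈ Finset.range (m - (PkF n ⇑w).card),
          Nat.choose (n + k) k *
            Nat.choose (n - 2 * (PkF n ⇑w).card - 1)
              (m - 1 - (PkF n ⇑w).card - k) := by
  classical
  obtain ⟨n, rfl⟩ := Nat.exists_eq_succ_of_ne_zero (NeZero.ne n)
  rw [card_enriched_eq_ncard, ncard_enrichedWords _ (Or.inl rfl)]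
  rw [← card_PkF_eq_peakCount n w]
end

section
/- Order polynomial of enriched toric [w]-partitions: let w ∈ S_n with n ≥ 1, set c = cpk(w), and let m ≥ 0 be an integer. Then the number of functions f : [n] → ℙ′ that are enriched v-partitions for some rotation v ∈ [w] and satisfy |f(i)| ≤ m for all i equals (n − 2c)·2^{2c+1}·Σ_{k=0}^{m−1−c} C(n+k,k)·C(n−2c−1, m−1−c−k) + c·2^{2c}·Σ_{k=0}^{m−c} C(n+k,k)·C(n−2c+1, m−c−k), where C(a,b) denotes the binomial coefficient with the convention C(a,b) = 0 when a < 0 (this only matters when n = 2c, in which case the entire first term vanishes because of the factor n − 2c = 0), and empty sums are 0. -/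
open Finset PowerSeries

/-- The relation between consecutive letters of an enriched partition, as in `IsEnrichedLin`. -/
def EnrichedStep {n : ℕ} (f : Fin n → ℤ) (a b : Fin n) : Prop :=
  ple (f a) (f b) ∧ (f a = f b → (0 < f a → a < b) ∧ (f a < 0 → b < a))

lemma EnrichedStep.trans {n : ℕ} {f : Fin n → ℤ} {a b c : Fin n}
    (hab : EnrichedStep f a b) (hbc : EnrichedStep f b c) : EnrichedStep f a c := by
  unfold EnrichedStep ple at *
  simp only [Int.abs_eq_natAbs] at *
  omega

lemma EnrichedStep.asymm {n : ℕ} {f : Fin n → ℤ} {a b : Fin n} (h0 : f a ≠ 0)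
    (hab : EnrichedStep f a b) (hba : EnrichedStep f b a) : False := by
  unfold EnrichedStep ple at *
  simp only [Int.abs_eq_natAbs] at *
  omega

lemma IsEnrichedLin.step_of_lt {n : ℕ} {v : Fin n → Fin n} {f : Fin n → ℤ}
    (h : IsEnrichedLin n v f) (p q : Fin n) (hpq : p < q) : EnrichedStep f (v p) (v q) := by
  obtain ⟨q, hq⟩ := q
  induction q with
  | zero => exact absurd hpq (by simp [Fin.lt_def])
  | succ q ih =>
    have hlast : EnrichedStep f (v ⟨q, by omega⟩) (v ⟨q + 1, hq⟩) := h.2 _ _ rfl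
    rcases Nat.lt_or_ge p q with hlt | hge
    · exact (ih (by omega) hlt).trans hlast
    · have : p = ⟨q, by omega⟩ := by
        apply Fin.ext
        simp only [Fin.lt_def] at hpq
        simp only
        omega
      rwa [this]

lemma IsEnrichedLin.rotF_unique {K : ℕ} {w : Fin (K + 1) → Fin (K + 1)} {f : Fin (K + 1) → ℤ}
    {i j : Fin (K + 1)} (hi : IsEnrichedLin (K + 1) (rotF (K + 1) i w) f)
    (hj : IsEnrichedLin (K + 1) (rotF (K + 1) j w) f) : i = j := by
  by_contra hne
  have key : ∀ a b : Fin (K + 1), a ≠ b → IsEnrichedLin (K + 1) (rotF (K + 1) a w) f →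
      EnrichedStep f (w a) (w b) := by
    intro a b hab ha
    have := ha.step_of_lt 0 (b - a) (Fin.pos_iff_ne_zero.2 (sub_ne_zero.2 hab.symm))
    simpa [rotF] using this
  exact (key i j hne hi).asymm (hi.1 _) (key j i (Ne.symm hne) hj)

/-- The order isomorphism from `ℕ` to `ℙ′`: `0, 1, 2, 3, …` go to `-1, 1, -2, 2, …`. -/
def decodeP (y : ℕ) : ℤ := if y % 2 = 1 then ((y / 2 + 1 : ℕ) : ℤ) else -((y / 2 + 1 : ℕ) : ℤ)

/-- The inverse of `decodeP` on nonzero integers. -/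
def encodeP (x : ℤ) : ℕ := if 0 < x then 2 * x.natAbs - 1 else 2 * x.natAbs - 2

lemma decodeP_encodeP {x : ℤ} (hx : x ≠ 0) : decodeP (encodeP x) = x := by
  unfold decodeP encodeP
  split_ifs <;> omega

lemma decodeP_injective : Function.Injective decodeP := by
  intro x y h
  unfold decodeP at h
  split_ifs at h <;> omega

lemma decodeP_ne_zero (y : ℕ) : decodeP y ≠ 0 := by
  unfold decodeP
  split_ifs <;> omega

lemma natAbs_decodeP (y : ℕ) : (decodeP y).natAbs = y / 2 + 1 := by
  unfold decodeP
  split_ifs <;> omega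

lemma decodeP_pos_iff (y : ℕ) : 0 < decodeP y ↔ y % 2 = 1 := by
  unfold decodeP
  split_ifs <;> omega

lemma ple_decodeP_iff (x y : ℕ) : ple (decodeP x) (decodeP y) ↔ x ≤ y := by
  unfold ple
  simp only [Int.abs_eq_natAbs, natAbs_decodeP, decodeP_injective.eq_iff, decodeP_pos_iff]
  have hx := decodeP_pos_iff x
  have := decodeP_ne_zero x
  omega

/-- Consecutive values `x, y` across an ascent (`b = true`) or a descent (`b = false`), in the
encoding where odd numbers stand for the positive elements of `ℙ′`. -/
def CodedStep (b : Bool) (x y : ℕ) : Prop := x < y ∨ (x = y ∧ (x % 2 = 1 ↔ b = true))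

instance (b : Bool) (x y : ℕ) : Decidable (CodedStep b x y) := by
  unfold CodedStep
  infer_instance

/-- The sequences of length `k + 1` ending in `y` in which the step entering position `j` has
type `st j`. -/
def codedSeqs (st : ℕ → Bool) : (k : ℕ) → ℕ → Finset (Fin (k + 1) → ℕ)
  | 0, y => {fun _ => y}
  | k + 1, y => ((range (y + 1)).filter fun x => CodedStep (st (k + 1)) x y).biUnion
      fun x => (codedSeqs st k x).image fun g => Fin.snoc g y

lemma mem_codedSeqs (st : ℕ → Bool) (k y : ℕ) (g : Fin (k + 1) → ℕ) :
    g ∈ codedSeqs st k y ↔ g (Fin.last k) = y ∧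
      ∀ j : Fin k, CodedStep (st (j + 1)) (g j.castSucc) (g j.succ) := by
  induction k generalizing y with
  | zero =>
    simp only [codedSeqs, mem_singleton, IsEmpty.forall_iff, and_true]
    constructor
    · rintro rfl; rfl
    · intro h
      funext i
      rw [Subsingleton.elim (α := Fin 1) i (Fin.last 0), h]
  | succ k ih =>
    simp only [codedSeqs, mem_biUnion, mem_filter, mem_range, mem_image]
    constructor
    · rintro ⟨x, ⟨-, hx⟩, g', hg', rfl⟩
      rw [ih] at hg'
      refine ⟨by simp, fun j => ?_⟩
      induction j using Fin.lastCases with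
      | last => simpa [hg'.1] using hx
      | cast j =>
        have := hg'.2 j
        rw [← Fin.castSucc_succ, Fin.snoc_castSucc, Fin.snoc_castSucc]
        simpa using this
    · rintro ⟨hlast, hstep⟩
      refine ⟨g (Fin.last k).castSucc, ⟨?_, ?_⟩, fun j => g j.castSucc, ?_, ?_⟩
      · have := hstep (Fin.last k)
        rw [Fin.succ_last, hlast] at this
        unfold CodedStep at this
        omega
      · have := hstep (Fin.last k)
        rwa [Fin.succ_last, hlast] at this
      · rw [ih]
        refine ⟨rfl, fun j => ?_⟩
        have := hstep j.castSucc
        simpa using this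
      · rw [← hlast]
        exact Fin.snoc_init_self g

/-- The number of sequences in `codedSeqs st k y`. -/
def codedCount (st : ℕ → Bool) : ℕ → ℕ → ℕ
  | 0, _ => 1
  | k + 1, y => ∑ x ∈ range y, codedCount st k x +
      if (y % 2 = 1 ↔ st (k + 1) = true) then codedCount st k y else 0

lemma codedSeqs_disjoint (st : ℕ → Bool) (k : ℕ) {x y : ℕ} (hxy : x ≠ y) :
    Disjoint (codedSeqs st k x) (codedSeqs st k y) := by
  rw [Finset.disjoint_left]
  intro g hx hy
  rw [mem_codedSeqs] at hx hy
  exact hxy (hx.1.symm.trans hy.1)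

lemma card_codedSeqs (st : ℕ → Bool) (k y : ℕ) :
    (codedSeqs st k y).card = codedCount st k y := by
  induction k generalizing y with
  | zero => simp [codedSeqs, codedCount]
  | succ k ih =>
    have hinj : Function.Injective
        (fun g : Fin (k + 1) → ℕ => (Fin.snoc g y : Fin (k + 2) → ℕ)) := by
      intro g g' h
      exact (Fin.snoc_injective2 h).1
    rw [codedSeqs, card_biUnion]
    · simp only [card_image_of_injective _ hinj, ih]
      rw [sum_filter, sum_range_succ, codedCount]
      congr 1
      · refine sum_congr rfl fun x hx => if_pos ?_
        exact Or.inl (mem_range.1 hx)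
      · simp [CodedStep]
    · intro x _ x' _ hne
      rw [Function.onFun, disjoint_image hinj]
      exact codedSeqs_disjoint st k hne

/-- The enriched `v`-partitions with absolute values at most `m`. -/
def enrichedFinset {K : ℕ} (v : Equiv.Perm (Fin (K + 1))) (st : ℕ → Bool) (m : ℕ) :
    Finset (Fin (K + 1) → ℤ) :=
  ((range (2 * m)).biUnion (codedSeqs st K)).image fun g a => decodeP (g (v.symm a))

lemma card_enrichedFinset {K : ℕ} (v : Equiv.Perm (Fin (K + 1))) (st : ℕ → Bool) (m : ℕ) :
    (enrichedFinset v st m).card = ∑ y ∈ range (2 * m), codedCount st K y := by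
  rw [enrichedFinset, card_image_of_injective, card_biUnion]
  · simp only [card_codedSeqs]
  · intro x _ y _ hne
    exact codedSeqs_disjoint st K hne
  · intro g g' h
    funext j
    have := congrFun h (v j)
    simpa using decodeP_injective this

lemma isEnrichedLin_decodeP_iff {K : ℕ} (v : Equiv.Perm (Fin (K + 1))) (st : ℕ → Bool)
    (hst : ∀ j k : Fin (K + 1), (j : ℕ) + 1 = k → (st k = true ↔ v j < v k))
    (g : Fin (K + 1) → ℕ) :
    IsEnrichedLin (K + 1) v (fun a => decodeP (g (v.symm a))) ↔
      ∀ j : Fin K, CodedStep (st (j + 1)) (g j.castSucc) (g j.succ) := by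
  have key : ∀ j k : Fin (K + 1), (j : ℕ) + 1 = k →
      ((ple (decodeP (g j)) (decodeP (g k)) ∧ (decodeP (g j) = decodeP (g k) →
        (0 < decodeP (g j) → v j < v k) ∧ (decodeP (g j) < 0 → v k < v j))) ↔
      CodedStep (st k) (g j) (g k)) := by
    intro j k hjk
    have h1 := hst j k hjk
    have hne : v j ≠ v k := fun h => by
      have := v.injective h
      subst this
      omega
    have h2 : decodeP (g j) < 0 ↔ ¬ g j % 2 = 1 := by
      rw [← decodeP_pos_iff]
      have := decodeP_ne_zero (g j)
      omega
    rw [ple_decodeP_iff, decodeP_injective.eq_iff, decodeP_pos_iff, h2]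
    unfold CodedStep
    rw [h1]
    omega
  constructor
  · rintro ⟨-, h⟩ j
    have := h j.castSucc j.succ (by simp)
    simp only [Equiv.symm_apply_apply] at this
    exact (key j.castSucc j.succ (by simp)).1 this
  · intro h
    refine ⟨fun i => decodeP_ne_zero _, fun j k hjk => ?_⟩
    simp only [Equiv.symm_apply_apply]
    rw [key j k hjk]
    have hj : (j : ℕ) < K := by omega
    have := h ⟨j, hj⟩
    have e : (Fin.succ ⟨j, hj⟩ : Fin (K + 1)) = k := Fin.ext hjk
    rw [e] at this
    rw [← hjk]
    exact this

lemma mem_enrichedFinset {K : ℕ} (v : Equiv.Perm (Fin (K + 1))) (st : ℕ → Bool) (m : ℕ)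
    (hst : ∀ j k : Fin (K + 1), (j : ℕ) + 1 = k → (st k = true ↔ v j < v k))
    (f : Fin (K + 1) → ℤ) :
    f ∈ enrichedFinset v st m ↔ IsEnrichedLin (K + 1) v f ∧ ∀ a, (f a).natAbs ≤ m := by
  simp only [enrichedFinset, mem_image, mem_biUnion, mem_range, mem_codedSeqs]
  constructor
  · rintro ⟨g, ⟨y, hy, hlast, hg⟩, rfl⟩
    refine ⟨(isEnrichedLin_decodeP_iff v st hst g).2 hg, fun a => ?_⟩
    have hmono : Monotone g := Fin.monotone_iff_le_succ.2 fun j => by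
      have := hg j
      unfold CodedStep at this
      omega
    have := hmono (Fin.le_last (v.symm a))
    rw [natAbs_decodeP]
    omega
  · rintro ⟨hf, hm⟩
    have hfg : (fun a => decodeP ((fun j => encodeP (f (v j))) (v.symm a))) = f := by
      funext a
      simp [decodeP_encodeP (hf.1 a)]
    refine ⟨fun j => encodeP (f (v j)), ⟨_, ?_, rfl, ?_⟩, hfg⟩
    · have h1 := hm (v (Fin.last K))
      have h2 := hf.1 (v (Fin.last K))
      simp only [encodeP]
      split_ifs <;> omega
    · apply (isEnrichedLin_decodeP_iff v st hst fun j => encodeP (f (v j))).1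
      rwa [hfg]

/-- Generating function of the sequences ending in a positive element of `ℙ′`. -/
noncomputable def posSeries (st : ℕ → Bool) (k : ℕ) : ℤ⟦X⟧ :=
  PowerSeries.mk fun j => (codedCount st k (2 * j + 1) : ℤ)

/-- Generating function of the sequences ending in a negative element of `ℙ′`. -/
noncomputable def negSeries (st : ℕ → Bool) (k : ℕ) : ℤ⟦X⟧ :=
  PowerSeries.mk fun j => (codedCount st k (2 * j) : ℤ)

/-- Generating function of the sequences with absolute values at most a given bound. -/
noncomputable def totalSeries (st : ℕ → Bool) (k : ℕ) : ℤ⟦X⟧ :=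
  PowerSeries.mk fun j => ((∑ y ∈ range (2 * j), codedCount st k y : ℕ) : ℤ)

lemma one_sub_X_mul_totalSeries (st : ℕ → Bool) (k : ℕ) :
    (1 - X) * totalSeries st k = X * (posSeries st k + negSeries st k) := by
  have : totalSeries st k = X * (totalSeries st k + (posSeries st k + negSeries st k)) := by
    ext j
    cases j with
    | zero => simp [totalSeries]
    | succ j =>
      rw [coeff_succ_X_mul]
      simp only [totalSeries, posSeries, negSeries, coeff_mk, map_add]
      rw [show 2 * (j + 1) = 2 * j + 1 + 1 by ring, sum_range_succ, sum_range_succ]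
      push_cast
      ring
  linear_combination this

/-- The contribution of two consecutive steps of types `p` and `q`. -/
noncomputable def junction (p q : Bool) : ℤ⟦X⟧ := (if q then 1 else X) + (if p then X else 1)

lemma posSeries_succ (st : ℕ → Bool) (k : ℕ) : posSeries st (k + 1) =
    totalSeries st k + negSeries st k + if st (k + 1) then posSeries st k else 0 := by
  ext j
  cases h : st (k + 1) <;>
  simp [posSeries, negSeries, totalSeries, codedCount, sum_range_succ, h, Nat.add_mod]

lemma negSeries_succ (st : ℕ → Bool) (k : ℕ) : negSeries st (k + 1) =
    totalSeries st k + if st (k + 1) then 0 else negSeries st k := by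
  ext j
  cases h : st (k + 1) <;>
  simp [negSeries, totalSeries, codedCount, h]

lemma posSeries_negSeries_eq (st : ℕ → Bool) (h0 : st 0 = false) (k : ℕ) :
    (1 - X) ^ (k + 1) * posSeries st k = ∏ i ∈ range k, junction (st i) (st (i + 1)) ∧
    (1 - X) ^ (k + 1) * negSeries st k =
      (∏ i ∈ range k, junction (st i) (st (i + 1))) * if st k then X else 1 := by
  induction k with
  | zero =>
    have h : (1 - X : ℤ⟦X⟧) * PowerSeries.mk 1 = 1 := by
      rw [mul_comm]; exact PowerSeries.mk_one_mul_one_sub_eq_one ℤ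
    have h1 : posSeries st 0 = PowerSeries.mk 1 := by ext; simp [posSeries, codedCount]
    have h2 : negSeries st 0 = PowerSeries.mk 1 := by ext; simp [negSeries, codedCount]
    simp [h0, h1, h2, h]
  | succ k ih =>
    obtain ⟨hp, hn⟩ := ih
    have ht := one_sub_X_mul_totalSeries st k
    rw [prod_range_succ, posSeries_succ, negSeries_succ, ← hp]
    rw [← hp] at hn
    unfold junction
    cases hq : st (k + 1) <;> simp only [if_true, Bool.false_eq_true, if_false] <;> constructor
    · linear_combination (1 - X) ^ (k + 1) * ht + hn
    · linear_combination (1 - X) ^ (k + 1) * ht + hn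
    · linear_combination (1 - X) ^ (k + 1) * ht + hn
    · linear_combination (1 - X) ^ (k + 1) * ht + X * hn

lemma totalSeries_eq (st : ℕ → Bool) (h0 : st 0 = false) (k : ℕ) :
    (1 - X) ^ (k + 2) * totalSeries st k =
      X * ((∏ i ∈ range k, junction (st i) (st (i + 1))) * junction (st k) true) := by
  obtain ⟨hp, hn⟩ := posSeries_negSeries_eq st h0 k
  have ht := one_sub_X_mul_totalSeries st k
  rw [← hp] at hn ⊢
  simp only [junction, if_true]
  linear_combination (1 - X) ^ (k + 1) * ht + X * hn

/-- Cutting a cyclic sequence of steps `τ` at the step `τ 0`, compared with the cyclic product. -/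
lemma linear_vs_cyclic (τ st : ℕ → Bool) (K : ℕ) (h0 : st 0 = false)
    (hst : ∀ k, 1 ≤ k → k ≤ K → st k = τ k) (hper : τ (K + 1) = τ 0) :
    if (τ 0 = true ∧ τ 1 = false) ∨ (τ 0 = false ∧ τ K = true) then
      ((∏ i ∈ range K, junction (st i) (st (i + 1))) * junction (st K) true) * (2 * X) =
        (∏ i ∈ range (K + 1), junction (τ i) (τ (i + 1))) * (1 + X)
    else
      ((∏ i ∈ range K, junction (st i) (st (i + 1))) * junction (st K) true) * (1 + X) =
        (∏ i ∈ range (K + 1), junction (τ i) (τ (i + 1))) * 2 := by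
  cases K with
  | zero =>
    simp only [zero_add] at hper
    cases h : τ 0 <;> simp [hper, h0, h, junction] <;> ring
  | succ K =>
    have hM : ∏ i ∈ range K, junction (st (i + 1)) (st (i + 1 + 1)) =
        ∏ i ∈ range K, junction (τ (i + 1)) (τ (i + 1 + 1)) :=
      prod_congr rfl fun i hi => by
        have := mem_range.1 hi
        rw [hst _ (by omega) (by omega), hst _ (by omega) (by omega)]
    rw [prod_range_succ _ (K + 1), prod_range_succ', prod_range_succ', hM, hper, h0, zero_add,
      hst 1 le_rfl (by omega), hst (K + 1) (by omega) le_rfl]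
    generalize ∏ i ∈ range K, junction (τ (i + 1)) (τ (i + 1 + 1)) = M
    simp only [junction]
    cases τ 0 <;> cases τ 1 <;> cases τ (K + 1) <;> simp <;> ring

/-- The number of cyclic positions with a step of type `p` followed by one of type `q`. -/
def junctionCount {K : ℕ} (σ : Fin (K + 1) → Bool) (p q : Bool) : ℕ :=
  (univ.filter fun i => σ i = p ∧ σ (i + 1) = q).card

lemma card_filter_add_one {K : ℕ} (P : Fin (K + 1) → Prop)
    [DecidablePred P] :
    (univ.filter fun i => P (i + 1)).card = (univ.filter P).card :=
  card_equiv (Equiv.addRight 1) (by simp)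

lemma junctionCount_add {K : ℕ} (σ : Fin (K + 1) → Bool) :
    junctionCount σ true false = junctionCount σ false true ∧
    junctionCount σ true true + junctionCount σ false false + 2 * junctionCount σ true false =
      K + 1 := by
  have split : ∀ (P Q : Fin (K + 1) → Prop) [DecidablePred P] [DecidablePred Q],
      (univ.filter fun i => P i ∧ Q i).card + (univ.filter fun i => P i ∧ ¬ Q i).card =
        (univ.filter P).card := by
    intro P Q _ _
    rw [← filter_filter, ← filter_filter, card_filter_add_card_filter_not]
  have h1 := split (fun i => σ i = true) (fun i => σ (i + 1) = true)
  have h2 := split (fun i => σ (i + 1) = true) (fun i => σ i = true)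
  have h3 := split (fun i => σ i = false) (fun i => σ (i + 1) = true)
  have h4 := card_filter_add_one (fun i => σ i = true)
  have h5 := card_filter_add_card_filter_not (s := (univ : Finset (Fin (K + 1))))
    (fun i => σ i = true)
  simp only [Bool.not_eq_true, card_univ, Fintype.card_fin] at h1 h2 h3 h4 h5
  simp only [and_comm (a := σ (_ + 1) = true)] at h2
  unfold junctionCount
  omega

lemma prod_junction {K : ℕ} (σ : Fin (K + 1) → Bool) :
    ∏ i, junction (σ i) (σ (i + 1)) =
      (1 + X) ^ (K + 1 - 2 * junctionCount σ true false) *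
        (4 * X) ^ junctionCount σ true false := by
  have h : ∏ i, junction (σ i) (σ (i + 1)) =
      ∏ i, ((if σ i = true ∧ σ (i + 1) = true then (1 + X : ℤ⟦X⟧) else 1) *
        (if σ i = false ∧ σ (i + 1) = false then (1 + X) else 1) *
        (if σ i = true ∧ σ (i + 1) = false then 2 * X else 1) *
        (if σ i = false ∧ σ (i + 1) = true then 2 else 1)) := by
    refine prod_congr rfl fun i _ => ?_
    unfold junction
    cases σ i <;> cases σ (i + 1) <;> simp <;> ring
  obtain ⟨h1, h2⟩ := junctionCount_add σ
  rw [h]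
  simp only [prod_mul_distrib, prod_ite, prod_const, one_pow, mul_one]
  simp only [← mul_pow]
  change (1 + X : ℤ⟦X⟧) ^ junctionCount σ true true * (1 + X) ^ junctionCount σ false false *
    (2 * X) ^ junctionCount σ true false * 2 ^ junctionCount σ false true = _
  rw [← h1, ← pow_add, mul_assoc, ← mul_pow]
  congr 2
  · omega
  · ring

/-- The step types of `w` read cyclically: is the step entering position `i` an ascent? -/
def cyclicAscent {K : ℕ} (w : Fin (K + 1) → Fin (K + 1)) (i : Fin (K + 1)) : Bool :=
  decide (w (i - 1) < w i)

lemma card_cPkF {K : ℕ} (w : Equiv.Perm (Fin (K + 1))) :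
    (cPkF (K + 1) w).card = junctionCount (cyclicAscent w) true false := by
  unfold cPkF junctionCount
  congr 1
  ext i
  simp only [mem_filter, mem_univ, true_and, cyclicAscent, decide_eq_true_eq,
    decide_eq_false_iff_not, add_sub_cancel_right, not_lt]
  refine and_congr_right fun h => ⟨le_of_lt, fun h' => lt_of_le_of_ne h' fun he => ?_⟩
  have h1 : i + 1 = i := w.injective he
  have h2 : (1 : Fin (K + 1)) = 0 := by simpa using h1
  simp [h2] at h

/-- The step types of the rotation of `w` starting at position `i`, after an initial `false`. -/
def rotStep {K : ℕ} (w : Fin (K + 1) → Fin (K + 1)) (i : Fin (K + 1)) (k : ℕ) : Bool :=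
  if k = 0 then false else cyclicAscent w (i + Fin.ofNat (K + 1) k)

lemma rotStep_iff {K : ℕ} (w : Equiv.Perm (Fin (K + 1))) (i j k : Fin (K + 1))
    (hjk : (j : ℕ) + 1 = k) :
    rotStep w i k = true ↔ (Equiv.addRight i).trans w j < (Equiv.addRight i).trans w k := by
  have hk : k = j + 1 := by
    have hj : j.val < K := by omega
    apply Fin.ext
    rw [Fin.val_add_one_of_lt (by simpa [Fin.lt_def] using hj), hjk]
  have h0 : (k : ℕ) ≠ 0 := by omega
  have hc : Fin.ofNat (K + 1) (k : ℕ) = k := by simp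
  have e : i + k - 1 = j + i := by rw [hk]; abel
  simp only [rotStep, h0, if_false, hc, cyclicAscent, decide_eq_true_eq, e]
  simp [add_comm i k]

/-- Whether removing the step entering `i` destroys a cyclic peak. -/
def IsPeakStep {K : ℕ} (σ : Fin (K + 1) → Bool) (i : Fin (K + 1)) : Prop :=
  (σ i = true ∧ σ (i + 1) = false) ∨ (σ i = false ∧ σ (i - 1) = true)

instance {K : ℕ} (σ : Fin (K + 1) → Bool) : DecidablePred (IsPeakStep σ) := fun i => by
  unfold IsPeakStep
  infer_instance

lemma card_isPeakStep {K : ℕ} (σ : Fin (K + 1) → Bool) :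
    (univ.filter (IsPeakStep σ)).card = 2 * junctionCount σ true false := by
  unfold IsPeakStep
  rw [filter_or, card_union_of_disjoint, ← card_filter_add_one
    (fun i => σ i = false ∧ σ (i - 1) = true)]
  · simp only [add_sub_cancel_right, and_comm (b := σ _ = true)]
    unfold junctionCount
    ring
  · rw [disjoint_filter]
    rintro i - ⟨h, -⟩ ⟨h', -⟩
    simp [h] at h'

lemma totalSeries_rotStep {K : ℕ} (w : Fin (K + 1) → Fin (K + 1)) (i : Fin (K + 1)) :
    (1 - X) ^ (K + 2) * totalSeries (rotStep w i) K * (2 * (1 + X)) =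
      (∏ j, junction (cyclicAscent w j) (cyclicAscent w (j + 1))) *
        if IsPeakStep (cyclicAscent w) i then (1 + X) ^ 2 else 4 * X := by
  set σ := cyclicAscent w with hσ
  let τ : ℕ → Bool := fun k => σ (i + Fin.ofNat (K + 1) k)
  have hτ0 : τ 0 = σ i := by simp [τ]
  have hτ1 : τ 1 = σ (i + 1) := rfl
  have hsucc : ∀ k, Fin.ofNat (K + 1) (k + 1) = Fin.ofNat (K + 1) k + 1 := by
    intro k
    apply Fin.ext
    simp [Fin.val_add]
  have hlast : Fin.ofNat (K + 1) K + 1 = 0 := by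
    rw [← hsucc]
    apply Fin.ext
    simp
  have hτK : τ K = σ (i - 1) := by
    simp only [τ]
    rw [eq_neg_of_add_eq_zero_left hlast, sub_eq_add_neg]
  have hper : τ (K + 1) = τ 0 := by
    rw [hτ0]
    simp only [τ]
    rw [hsucc, hlast, add_zero]
  have hprod : ∏ k ∈ range (K + 1), junction (τ k) (τ (k + 1)) =
      ∏ j, junction (σ j) (σ (j + 1)) := by
    rw [← Fin.prod_univ_eq_prod_range (fun k => junction (τ k) (τ (k + 1)))]
    refine Fintype.prod_equiv (Equiv.addLeft i) _ _ fun k => ?_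
    simp only [τ, hsucc, Equiv.coe_addLeft, add_assoc, Fin.ofNat_val_eq_self]
  have hlin := linear_vs_cyclic τ (rotStep w i) K (by simp [rotStep])
    (fun k hk _ => by simp [rotStep, τ, Nat.ne_of_gt hk, hσ]) hper
  rw [hprod, hτ0, hτ1, hτK] at hlin
  rw [totalSeries_eq _ (by simp [rotStep])]
  by_cases hP : IsPeakStep σ i
  · rw [if_pos hP]
    rw [if_pos (by exact hP)] at hlin
    linear_combination (1 + X) * hlin
  · rw [if_neg hP]
    rw [if_neg (by exact hP)] at hlin
    linear_combination 2 * X * hlin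

lemma sum_totalSeries_rotStep {K : ℕ} (w : Fin (K + 1) → Fin (K + 1)) (c : ℕ)
    (hc : c = junctionCount (cyclicAscent w) true false) :
    (1 - X) ^ (K + 2) * ∑ i, totalSeries (rotStep w i) K =
      ((K + 1 - 2 * c : ℕ) : ℤ⟦X⟧) * 2 ^ (2 * c + 1) *
        (X ^ (c + 1) * (1 + X) ^ (K + 1 - 2 * c - 1))
      + (c : ℤ⟦X⟧) * 2 ^ (2 * c) * (X ^ c * (1 + X) ^ (K + 1 - 2 * c + 1)) := by
  have hne : (2 * (1 + X) : ℤ⟦X⟧) ≠ 0 := by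
    intro h
    have := congrArg (coeff 1) h
    simp [two_mul, coeff_one] at this
  have hcard := card_isPeakStep (cyclicAscent w)
  have hnot := card_filter_add_card_filter_not (s := (univ : Finset (Fin (K + 1))))
    (IsPeakStep (cyclicAscent w))
  rw [card_univ, Fintype.card_fin] at hnot
  have hnot' : (univ.filter fun i => ¬ IsPeakStep (cyclicAscent w) i).card = K + 1 - 2 * c := by
    omega
  apply mul_right_cancel₀ hne
  rw [mul_sum, sum_mul]
  simp only [totalSeries_rotStep]
  rw [← mul_sum, sum_ite, sum_const, sum_const, hnot', hcard, prod_junction, ← hc]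
  have h4 : (2 : ℤ⟦X⟧) ^ (2 * c) = 4 ^ c := by rw [pow_mul]; norm_num
  rw [pow_succ 2, h4, mul_pow]
  simp only [nsmul_eq_mul]
  push_cast
  cases K + 1 - 2 * c with
  | zero => simp; ring
  | succ d =>
    simp only [Nat.add_sub_cancel]
    ring

lemma coeff_X_pow_mul_one_add_X_pow_mul_choose (N a b m : ℕ) :
    coeff m (X ^ a * (1 + X) ^ b * PowerSeries.mk fun k => (((N + k).choose N : ℕ) : ℤ)) =
      ((∑ k ∈ range (m + 1 - a), (N + k).choose k * b.choose (m - a - k) : ℕ) : ℤ) := by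
  rw [mul_assoc, coeff_X_pow_mul']
  split_ifs with h
  · rw [mul_comm, coeff_mul, Finset.Nat.sum_antidiagonal_eq_sum_range_succ_mk]
    rw [show (m - a).succ = m + 1 - a by omega]
    push_cast
    refine sum_congr rfl fun k _ => ?_
    rw [coeff_mk, Nat.choose_symm_add, add_comm (1 : ℤ⟦X⟧) X]
    congr 1
    have : (((Polynomial.X + 1 : Polynomial ℤ) ^ b : Polynomial ℤ) : ℤ⟦X⟧) = ((X : ℤ⟦X⟧) + 1) ^ b := by
      simp
    rw [← this, Polynomial.coeff_coe, Polynomial.coeff_X_add_one_pow]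
  · rw [show m + 1 - a = 0 by omega]
    simp

lemma card_enriched_toric {K : ℕ} (w : Equiv.Perm (Fin (K + 1))) (m : ℕ) :
    Nat.card {f : Fin (K + 1) → ℤ //
        (∃ i, IsEnrichedLin (K + 1) (rotF (K + 1) i w) f) ∧ ∀ i, (f i).natAbs ≤ m} =
      ∑ i, ∑ y ∈ range (2 * m), codedCount (rotStep w i) K y := by
  classical
  let E : Fin (K + 1) → Finset (Fin (K + 1) → ℤ) := fun i =>
    enrichedFinset ((Equiv.addRight i).trans w) (rotStep w i) m
  have hE : ∀ i f, f ∈ E i ↔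
      IsEnrichedLin (K + 1) (rotF (K + 1) i w) f ∧ ∀ a, (f a).natAbs ≤ m := fun i f =>
    mem_enrichedFinset _ _ m (rotStep_iff w i) f
  rw [Nat.subtype_card (univ.biUnion E), card_biUnion]
  · simp only [E, card_enrichedFinset]
  · intro i _ j _ hij
    rw [Function.onFun, Finset.disjoint_left]
    intro f hi hj
    exact hij (((hE i f).1 hi).1.rotF_unique ((hE j f).1 hj).1)
  · intro f
    simp only [mem_biUnion, mem_univ, true_and, hE, exists_and_right]

/-- order polynomial of enriched toric `[w]`-partitions: for
`w ∈ S_n` (`n ≥ 1`), `c = cpk w` and `m ≥ 0`, the number of `f : [n] → ℙ′` that are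
enriched `v`-partitions for some rotation `v ∈ [w]` and satisfy `|f i| ≤ m` equals
`(n−2c)·2^{2c+1}·Σ_{k=0}^{m−1−c} C(n+k,k)·C(n−2c−1, m−1−c−k)
  + c·2^{2c}·Σ_{k=0}^{m−c} C(n+k,k)·C(n−2c+1, m−c−k)`
(empty sums are `0`; when `n = 2c` the whole first term vanishes thanks to the
factor `n − 2c = 0`). -/
theorem stmt16 (n : ℕ) [NeZero n] (w : Equiv.Perm (Fin n)) (m : ℕ)
    (c : ℕ) (hc : c = (cPkF n ⇑w).card) :
    Nat.card {f : Fin n → ℤ //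
        (∃ i : Fin n, IsEnrichedLin n (rotF n i ⇑w) f) ∧ ∀ i, (f i).natAbs ≤ m} =
      (n - 2 * c) * 2 ^ (2 * c + 1) *
        (∑ k ∈ Finset.range (m - c),
          Nat.choose (n + k) k * Nat.choose (n - 2 * c - 1) (m - 1 - c - k)) +
      c * 2 ^ (2 * c) *
        (∑ k ∈ Finset.range (m + 1 - c),
          Nat.choose (n + k) k * Nat.choose (n - 2 * c + 1) (m - c - k)) := by
  obtain ⟨K, rfl⟩ := Nat.exists_eq_succ_of_ne_zero (NeZero.ne n)
  rw [card_enriched_toric w m, ← Int.natCast_inj]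
  have hcoeff := congrArg (fun F : ℤ⟦X⟧ =>
    coeff m (F * PowerSeries.mk fun k => (((K + 1 + k).choose (K + 1) : ℕ) : ℤ)))
    (sum_totalSeries_rotStep w c (hc.trans (card_cPkF w)))
  have hinv : (PowerSeries.mk fun k => (((K + 1 + k).choose (K + 1) : ℕ) : ℤ)) *
      (1 - X) ^ (K + 2) = 1 :=
    PowerSeries.mk_add_choose_mul_one_sub_pow_eq_one ℤ (K + 1)
  have hC : ∀ (a e : ℕ) (F : ℤ⟦X⟧),
      coeff m ((a : ℤ⟦X⟧) * 2 ^ e * F) = (a : ℤ) * 2 ^ e * coeff m F := by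
    intro a e F
    have : (a : ℤ⟦X⟧) * 2 ^ e = C ((a : ℤ) * 2 ^ e) := by simp
    rw [this, coeff_C_mul]
  beta_reduce at hcoeff
  rw [mul_right_comm, mul_comm ((1 - X) ^ (K + 2)), hinv, one_mul, map_sum, add_mul, map_add,
    mul_assoc, mul_assoc (c * 2 ^ (2 * c) : ℤ⟦X⟧), hC, hC,
    coeff_X_pow_mul_one_add_X_pow_mul_choose, coeff_X_pow_mul_one_add_X_pow_mul_choose,
    Nat.add_sub_add_right] at hcoeff
  simp only [totalSeries, coeff_mk] at hcoeff
  simp only [Nat.sub_sub m 1 c, Nat.add_comm 1 c]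
  exact_mod_cast hcoeff
end
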